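/- arXiv:2401.08078 — 3 statements merged into one kernel-verified Lean document; each statement's English description precedes it below -/
import Mathlib

section
/- Let 𝒜 be a weakly idempotent complete exact category and let (𝒳,𝒴) be a hereditary complete cotorsion pair in 𝒜 such that ω = 𝒳∩𝒴 is contravariantly finite in 𝒜. Then (CoFib_ω, Fib_ω, Weq_ω) is a closed model structure on 𝒜; moreover its class of trivial cofibrations CoFib_ω ∩ Weq_ω equals TCoFib_ω (the split monomorphisms with cokernel in ω), and its class of trivial fibrations Fib_ω ∩ Weq_ω equals TFib_ω (the deflations with kernel in 𝒴). -/
open CategoryTheory Limits ZeroObject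

universe v u

/-- An exact structure (Quillen exact category) on an additive category `𝒜`:
a class of conflations (kernel-cokernel pairs), closed under isomorphisms,
with identities deflations, deflations closed under composition and stable
under pullback, and inflations stable under pushout. -/
structure ExactStructure (𝒜 : Type u) [Category.{v} 𝒜] [Preadditive 𝒜]
    [HasZeroObject 𝒜] [HasBinaryBiproducts 𝒜] : Type (max u v) where
  conflation : ∀ ⦃X Y Z : 𝒜⦄, (X ⟶ Y) → (Y ⟶ Z) → Prop
  comp_zero : ∀ {X Y Z : 𝒜} {i : X ⟶ Y} {d : Y ⟶ Z}, conflation i d → i ≫ d = 0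
  isKernel : ∀ {X Y Z : 𝒜} {i : X ⟶ Y} {d : Y ⟶ Z} (h : conflation i d),
    Nonempty (IsLimit (KernelFork.ofι i (comp_zero h)))
  isCokernel : ∀ {X Y Z : 𝒜} {i : X ⟶ Y} {d : Y ⟶ Z} (h : conflation i d),
    Nonempty (IsColimit (CokernelCofork.ofπ d (comp_zero h)))
  conflation_iso : ∀ {X Y Z X' Y' Z' : 𝒜} {i : X ⟶ Y} {d : Y ⟶ Z}
    (eX : X ≅ X') (eY : Y ≅ Y') (eZ : Z ≅ Z') {i' : X' ⟶ Y'} {d' : Y' ⟶ Z'},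
    conflation i d → i ≫ eY.hom = eX.hom ≫ i' → d ≫ eZ.hom = eY.hom ≫ d' →
    conflation i' d'
  id_deflation : ∀ X : 𝒜, conflation (0 : (0 : 𝒜) ⟶ X) (𝟙 X)
  deflation_comp : ∀ {X Y Z X' W : 𝒜} {i : X ⟶ Y} {d : Y ⟶ Z} {i' : X' ⟶ Z} {d' : Z ⟶ W},
    conflation i d → conflation i' d' → ∃ (K : 𝒜) (k : K ⟶ Y), conflation k (d ≫ d')
  pullback_deflation : ∀ {X Y Z Z' : 𝒜} {i : X ⟶ Y} {d : Y ⟶ Z},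
    conflation i d → ∀ (f : Z' ⟶ Z),
    ∃ (Y' : 𝒜) (f' : Y' ⟶ Y) (d' : Y' ⟶ Z') (K : 𝒜) (k : K ⟶ Y'),
      IsPullback f' d' d f ∧ conflation k d'
  pushout_inflation : ∀ {X Y Z X' : 𝒜} {i : X ⟶ Y} {d : Y ⟶ Z},
    conflation i d → ∀ (f : X ⟶ X'),
    ∃ (Y' : 𝒜) (f' : Y ⟶ Y') (i' : X' ⟶ Y') (Q : 𝒜) (q : Y' ⟶ Q),
      IsPushout i f f' i' ∧ conflation i' q

variable {𝒜 : Type u} [Category.{v} 𝒜] [Preadditive 𝒜] [HasZeroObject 𝒜]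
  [HasBinaryBiproducts 𝒜]

/-- `f` is an inflation: the first map of some conflation. -/
def IsInflation (E : ExactStructure 𝒜) {X Y : 𝒜} (i : X ⟶ Y) : Prop :=
  ∃ (Z : 𝒜) (d : Y ⟶ Z), E.conflation i d

/-- `f` is a deflation: the second map of some conflation. -/
def IsDeflation (E : ExactStructure 𝒜) {Y Z : 𝒜} (d : Y ⟶ Z) : Prop :=
  ∃ (X : 𝒜) (i : X ⟶ Y), E.conflation i d

/-- `𝒜` is weakly idempotent complete: every split epimorphism is a deflation. -/
def IsWIC (E : ExactStructure 𝒜) : Prop :=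
  ∀ {X Y : 𝒜} (d : X ⟶ Y) (s : Y ⟶ X), s ≫ d = 𝟙 Y → IsDeflation E d

/-- `Ext¹(A,B) = 0`: every conflation `B ⟶ M ⟶ A` splits. -/
def Ext1IsZero (E : ExactStructure 𝒜) (A B : 𝒜) : Prop :=
  ∀ {M : 𝒜} (i : B ⟶ M) (d : M ⟶ A), E.conflation i d → ∃ r : M ⟶ B, i ≫ r = 𝟙 B

/-- `(X, Y)` is a cotorsion pair: each class is the `Ext¹`-orthogonal of the other. -/
def IsCotorsionPair (E : ExactStructure 𝒜) (X Y : Set 𝒜) : Prop :=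
  (∀ A : 𝒜, A ∈ X ↔ ∀ B ∈ Y, Ext1IsZero E A B) ∧
  (∀ B : 𝒜, B ∈ Y ↔ ∀ A ∈ X, Ext1IsZero E A B)

/-- Completeness of a cotorsion pair: every object has approximation sequences. -/
def IsCompleteCP (E : ExactStructure 𝒜) (X Y : Set 𝒜) : Prop :=
  ∀ A : 𝒜,
    (∃ (Y₀ X₀ : 𝒜) (i : Y₀ ⟶ X₀) (d : X₀ ⟶ A), E.conflation i d ∧ X₀ ∈ X ∧ Y₀ ∈ Y) ∧
    (∃ (Y₁ X₁ : 𝒜) (i : A ⟶ Y₁) (d : Y₁ ⟶ X₁), E.conflation i d ∧ X₁ ∈ X ∧ Y₁ ∈ Y)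

/-- Heredity of a cotorsion pair: `X` is closed under kernels of deflations and
`Y` is closed under cokernels of inflations. -/
def IsHereditaryCP (E : ExactStructure 𝒜) (X Y : Set 𝒜) : Prop :=
  (∀ {K A B : 𝒜} (i : K ⟶ A) (d : A ⟶ B), E.conflation i d → A ∈ X → B ∈ X → K ∈ X) ∧
  (∀ {K A B : 𝒜} (i : K ⟶ A) (d : A ⟶ B), E.conflation i d → K ∈ Y → A ∈ Y → B ∈ Y)

/-- `t : W ⟶ B` is a right `ω`-approximation of `B`. -/
def IsRightApprox (ω : Set 𝒜) {W B : 𝒜} (t : W ⟶ B) : Prop :=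
  W ∈ ω ∧ ∀ (W' : 𝒜), W' ∈ ω → ∀ g : W' ⟶ B, ∃ h : W' ⟶ W, h ≫ t = g

/-- `ω` is contravariantly finite: every object has a right `ω`-approximation. -/
def IsContravariantlyFinite (ω : Set 𝒜) : Prop :=
  ∀ B : 𝒜, ∃ (W : 𝒜) (t : W ⟶ B), IsRightApprox ω t

/-- A full additive subcategory closed under isomorphisms and direct summands,
viewed as a class of objects. -/
def AdditivelyClosed (S : Set 𝒜) : Prop :=
  (0 : 𝒜) ∈ S ∧ (∀ A B : 𝒜, A ∈ S → B ∈ S → (A ⊞ B) ∈ S) ∧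
  (∀ {A B : 𝒜}, (A ≅ B) → A ∈ S → B ∈ S) ∧
  (∀ {A B : 𝒜} (i : A ⟶ B) (r : B ⟶ A), i ≫ r = 𝟙 A → B ∈ S → A ∈ S)

/-- `CoFib_ω`: inflations with cokernel in `X`. -/
def CoFibO (E : ExactStructure 𝒜) (X : Set 𝒜) : MorphismProperty 𝒜 :=
  fun _ B f => ∃ (Z : 𝒜) (d : B ⟶ Z), E.conflation f d ∧ Z ∈ X

/-- `Fib_ω`: the `ω`-epic morphisms. -/
def FibO (ω : Set 𝒜) : MorphismProperty 𝒜 :=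
  fun A B f => ∀ (W : 𝒜), W ∈ ω → ∀ g : W ⟶ B, ∃ h : W ⟶ A, h ≫ f = g

/-- `Weq_ω`: morphisms `f : A ⟶ B` such that for some `W ∈ ω` and `t : W ⟶ B`,
`(f,t) : A ⊞ W ⟶ B` is a deflation with kernel in `Y`. -/
def WeqO (E : ExactStructure 𝒜) (ω Y : Set 𝒜) : MorphismProperty 𝒜 :=
  fun A B f => ∃ (W : 𝒜) (_ : W ∈ ω) (t : W ⟶ B) (K : 𝒜) (k : K ⟶ A ⊞ W),
    E.conflation k (biprod.desc f t) ∧ K ∈ Y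

/-- `TCoFib_ω`: split monomorphisms with cokernel in `ω`. -/
def TCoFibO (E : ExactStructure 𝒜) (ω : Set 𝒜) : MorphismProperty 𝒜 :=
  fun A B f => (∃ r : B ⟶ A, f ≫ r = 𝟙 A) ∧
    ∃ (Z : 𝒜) (d : B ⟶ Z), E.conflation f d ∧ Z ∈ ω

/-- `TFib_ω`: deflations with kernel in `Y`. -/
def TFibO (E : ExactStructure 𝒜) (Y : Set 𝒜) : MorphismProperty 𝒜 :=
  fun A _ f => ∃ (K : 𝒜) (k : K ⟶ A), E.conflation k f ∧ K ∈ Y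

/-- `g` is a retract of `f`. -/
def IsRetractMor {A' B' A B : 𝒜} (g : A' ⟶ B') (f : A ⟶ B) : Prop :=
  ∃ (φ₁ : A' ⟶ A) (ψ₁ : A ⟶ A') (φ₂ : B' ⟶ B) (ψ₂ : B ⟶ B'),
    φ₁ ≫ ψ₁ = 𝟙 A' ∧ φ₂ ≫ ψ₂ = 𝟙 B' ∧ φ₁ ≫ f = g ≫ φ₂ ∧ f ≫ ψ₂ = ψ₁ ≫ g

/-- A (closed, Quillen) model structure, given by classes of cofibrations,
fibrations and weak equivalences. -/
structure IsModelStructure (C F W : MorphismProperty 𝒜) : Prop where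
  weq_comp : ∀ {X Y Z : 𝒜} (f : X ⟶ Y) (g : Y ⟶ Z), W f → W g → W (f ≫ g)
  weq_cancel_left : ∀ {X Y Z : 𝒜} (f : X ⟶ Y) (g : Y ⟶ Z), W f → W (f ≫ g) → W g
  weq_cancel_right : ∀ {X Y Z : 𝒜} (f : X ⟶ Y) (g : Y ⟶ Z), W g → W (f ≫ g) → W f
  retract_cofib : ∀ {A' B' A B : 𝒜} (g : A' ⟶ B') (f : A ⟶ B),
    IsRetractMor g f → C f → C g
  retract_fib : ∀ {A' B' A B : 𝒜} (g : A' ⟶ B') (f : A ⟶ B),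
    IsRetractMor g f → F f → F g
  retract_weq : ∀ {A' B' A B : 𝒜} (g : A' ⟶ B') (f : A ⟶ B),
    IsRetractMor g f → W f → W g
  lifting_left : ∀ {A B X Y : 𝒜} (i : A ⟶ B) (p : X ⟶ Y) (a : A ⟶ X) (b : B ⟶ Y),
    C i → W i → F p → a ≫ p = i ≫ b → ∃ s : B ⟶ X, i ≫ s = a ∧ s ≫ p = b
  lifting_right : ∀ {A B X Y : 𝒜} (i : A ⟶ B) (p : X ⟶ Y) (a : A ⟶ X) (b : B ⟶ Y),
    C i → F p → W p → a ≫ p = i ≫ b → ∃ s : B ⟶ X, i ≫ s = a ∧ s ≫ p = b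
  fact_left : ∀ {A B : 𝒜} (f : A ⟶ B), ∃ (Z : 𝒜) (i : A ⟶ Z) (p : Z ⟶ B),
    i ≫ p = f ∧ C i ∧ W i ∧ F p
  fact_right : ∀ {A B : 𝒜} (f : A ⟶ B), ∃ (Z : 𝒜) (j : A ⟶ Z) (q : Z ⟶ B),
    j ≫ q = f ∧ C j ∧ F q ∧ W q

/-- An object is cofibrant if `0 ⟶ X` is a cofibration. -/
def Cofibrant (C : MorphismProperty 𝒜) (A : 𝒜) : Prop := C (0 : (0 : 𝒜) ⟶ A)

/-- An object is fibrant if `X ⟶ 0` is a fibration. -/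
def Fibrant (F : MorphismProperty 𝒜) (A : 𝒜) : Prop := F (0 : A ⟶ (0 : 𝒜))

/-- An object is trivial if `0 ⟶ X` is a weak equivalence. -/
def TrivialObj (W : MorphismProperty 𝒜) (A : 𝒜) : Prop := W (0 : (0 : 𝒜) ⟶ A)

/-- `P` is projective in the exact category. -/
def IsProjObj (E : ExactStructure 𝒜) (P : 𝒜) : Prop :=
  ∀ {A B : 𝒜} (d : A ⟶ B), IsDeflation E d → ∀ g : P ⟶ B, ∃ h : P ⟶ A, h ≫ d = g

/-- The exact category has enough projective objects. -/
def HasEnoughProj (E : ExactStructure 𝒜) : Prop :=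
  ∀ X : 𝒜, ∃ (P : 𝒜) (d : P ⟶ X), IsProjObj E P ∧ IsDeflation E d

/-- Cofibrations are exactly the inflations with cofibrant cokernel. -/
def CofibsAreInflWithCofibCoker (E : ExactStructure 𝒜) (C : MorphismProperty 𝒜) : Prop :=
  ∀ {A B : 𝒜} (f : A ⟶ B),
    C f ↔ ∃ (Z : 𝒜) (d : B ⟶ Z), E.conflation f d ∧ Cofibrant C Z

/-- Fibrations are exactly the deflations with fibrant kernel. -/
def FibsAreDeflWithFibKer (E : ExactStructure 𝒜) (F : MorphismProperty 𝒜) : Prop :=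
  ∀ {A B : 𝒜} (f : A ⟶ B),
    F f ↔ ∃ (K : 𝒜) (k : K ⟶ A), E.conflation k f ∧ Fibrant F K

/-- Trivial fibrations are exactly the deflations with trivially fibrant kernel. -/
def TrivFibsAreDeflWithTrivFibKer (E : ExactStructure 𝒜)
    (F W : MorphismProperty 𝒜) : Prop :=
  ∀ {A B : 𝒜} (f : A ⟶ B),
    (F f ∧ W f) ↔ ∃ (K : 𝒜) (k : K ⟶ A), E.conflation k f ∧ Fibrant F K ∧ TrivialObj W K

/-- Every cofibration is an inflation. -/
def CofibsAreInfl (E : ExactStructure 𝒜) (C : MorphismProperty 𝒜) : Prop :=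
  ∀ {A B : 𝒜} (f : A ⟶ B), C f → IsInflation E f

/-- Every trivial fibration is a deflation. -/
def TrivFibsAreDefl (E : ExactStructure 𝒜) (F W : MorphismProperty 𝒜) : Prop :=
  ∀ {A B : 𝒜} (f : A ⟶ B), F f → W f → IsDeflation E f

/-- An exact model structure in the sense of Gillespie. -/
def IsExactModelStr (E : ExactStructure 𝒜) (C F W : MorphismProperty 𝒜) : Prop :=
  IsModelStructure C F W ∧ CofibsAreInflWithCofibCoker E C ∧ FibsAreDeflWithFibKer E F

/-- A weakly projective model structure: every object is fibrant, cofibrations are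
exactly the inflations with cofibrant cokernel, and trivial fibrations are exactly
the deflations with trivially fibrant kernel. -/
def IsWeaklyProjModelStr (E : ExactStructure 𝒜) (C F W : MorphismProperty 𝒜) : Prop :=
  IsModelStructure C F W ∧ (∀ A : 𝒜, Fibrant F A) ∧
    CofibsAreInflWithCofibCoker E C ∧ TrivFibsAreDeflWithTrivFibKer E F W

/-- A projective model structure: an exact model structure with every object fibrant. -/
def IsProjectiveModelStr (E : ExactStructure 𝒜) (C F W : MorphismProperty 𝒜) : Prop :=
  IsExactModelStr E C F W ∧ (∀ A : 𝒜, Fibrant F A)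

/-- A class of objects is thick: closed under direct summands and two-out-of-three
in conflations. -/
def IsThick (E : ExactStructure 𝒜) (S : Set 𝒜) : Prop :=
  (∀ {A B : 𝒜} (i : A ⟶ B) (r : B ⟶ A), i ≫ r = 𝟙 A → B ∈ S → A ∈ S) ∧
  (∀ {X Y Z : 𝒜} (i : X ⟶ Y) (d : Y ⟶ Z), E.conflation i d →
    ((X ∈ S → Y ∈ S → Z ∈ S) ∧ (X ∈ S → Z ∈ S → Y ∈ S) ∧ (Y ∈ S → Z ∈ S → X ∈ S)))


namespace OmegaModel

section ExactLemmas

variable {E : ExactStructure 𝒜}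

theorem confl_lift {A B C T : 𝒜} {i : A ⟶ B} {d : B ⟶ C} (h : E.conflation i d)
    (u : T ⟶ B) (hu : u ≫ d = 0) : ∃ v : T ⟶ A, v ≫ i = u := by
  obtain ⟨hl⟩ := E.isKernel h
  exact ⟨(KernelFork.IsLimit.lift' hl u hu).1, (KernelFork.IsLimit.lift' hl u hu).2⟩

theorem confl_desc {A B C T : 𝒜} {i : A ⟶ B} {d : B ⟶ C} (h : E.conflation i d)
    (u : B ⟶ T) (hu : i ≫ u = 0) : ∃ v : C ⟶ T, d ≫ v = u := by
  obtain ⟨hl⟩ := E.isCokernel h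
  exact ⟨(CokernelCofork.IsColimit.desc' hl u hu).1, (CokernelCofork.IsColimit.desc' hl u hu).2⟩

theorem confl_mono {A B C : 𝒜} {i : A ⟶ B} {d : B ⟶ C} (h : E.conflation i d) : Mono i := by
  obtain ⟨hl⟩ := E.isKernel h
  exact ⟨fun a b hab => Fork.IsLimit.hom_ext hl hab⟩

theorem confl_epi {A B C : 𝒜} {i : A ⟶ B} {d : B ⟶ C} (h : E.conflation i d) : Epi d := by
  obtain ⟨hl⟩ := E.isCokernel h
  exact ⟨fun a b hab => Cofork.IsColimit.hom_ext hl hab⟩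

/-- Any kernel of a deflation gives a conflation. -/
theorem confl_of_kernel {A A' B C : 𝒜} {i : A ⟶ B} {d : B ⟶ C} (h : E.conflation i d)
    (i' : A' ⟶ B) (h0 : i' ≫ d = 0) (hm : Mono i')
    (hl : ∀ {T : 𝒜} (u : T ⟶ B), u ≫ d = 0 → ∃ v : T ⟶ A', v ≫ i' = u) :
    E.conflation i' d := by
  have := confl_mono h
  obtain ⟨a, ha⟩ := hl i (E.comp_zero h)
  obtain ⟨b, hb⟩ := confl_lift h i' h0
  have hab : a ≫ b = 𝟙 _ := by rw [← cancel_mono i, Category.assoc, hb, ha, Category.id_comp]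
  have hba : b ≫ a = 𝟙 _ := by rw [← cancel_mono i', Category.assoc, ha, hb, Category.id_comp]
  exact E.conflation_iso ⟨a, b, hab, hba⟩ (Iso.refl _) (Iso.refl _) h (by simp [ha]) (by simp)

/-- Any cokernel of an inflation gives a conflation. -/
theorem confl_of_cokernel {A B C C' : 𝒜} {i : A ⟶ B} {d : B ⟶ C} (h : E.conflation i d)
    (d' : B ⟶ C') (h0 : i ≫ d' = 0) (hm : Epi d')
    (hl : ∀ {T : 𝒜} (u : B ⟶ T), i ≫ u = 0 → ∃ v : C' ⟶ T, d' ≫ v = u) :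
    E.conflation i d' := by
  have := confl_epi h
  obtain ⟨a, ha⟩ := hl d (E.comp_zero h)
  obtain ⟨b, hb⟩ := confl_desc h d' h0
  have hab : a ≫ b = 𝟙 _ := by rw [← cancel_epi d', ← Category.assoc, ha, hb, Category.comp_id]
  have hba : b ≫ a = 𝟙 _ := by rw [← cancel_epi d, ← Category.assoc, hb, ha, Category.comp_id]
  exact E.conflation_iso (Iso.refl _) (Iso.refl _) ⟨b, a, hba, hab⟩ h (by simp) (by simp [hb])

/-- In a pullback square over a deflation, the opposite map is a deflation with the same kernel. -/
theorem confl_pullback {A B C C' P : 𝒜} {i : A ⟶ B} {d : B ⟶ C} (h : E.conflation i d)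
    {f : C' ⟶ C} {f' : P ⟶ B} {d' : P ⟶ C'} (hp : IsPullback f' d' d f) :
    ∃ k : A ⟶ P, E.conflation k d' ∧ k ≫ f' = i := by
  have := confl_mono h
  obtain ⟨P', g', e', K, k, hp', hk⟩ := E.pullback_deflation h f
  have h1 : E.conflation (k ≫ (hp'.isoIsPullback _ _ hp).hom) d' :=
    E.conflation_iso (Iso.refl _) (hp'.isoIsPullback _ _ hp) (Iso.refl _) hk (by simp) (by simp)
  have hi : i ≫ d = 0 ≫ f := by rw [E.comp_zero h]; simp
  refine ⟨hp.lift i 0 hi, ?_, by simp⟩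
  refine confl_of_kernel h1 _ (by simp) ⟨fun a b hab => ?_⟩ ?_
  · have := congrArg (fun z => z ≫ f') hab
    simp only [Category.assoc, hp.lift_fst] at this
    rwa [cancel_mono] at this
  · intro T u hu
    obtain ⟨v, hv⟩ := confl_lift h (u ≫ f') (by rw [Category.assoc, hp.w, reassoc_of% hu]; simp)
    exact ⟨v, hp.hom_ext (by simp [hv]) (by simp [hu])⟩

theorem confl_pushout {A B C A' P : 𝒜} {i : A ⟶ B} {d : B ⟶ C} (h : E.conflation i d)
    {f : A ⟶ A'} {f' : B ⟶ P} {i' : A' ⟶ P} (hp : IsPushout i f f' i') :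
    ∃ q : P ⟶ C, E.conflation i' q ∧ f' ≫ q = d := by
  have := confl_epi h
  obtain ⟨P', g', e', K, k, hp', hk⟩ := E.pushout_inflation h f
  have h1 : E.conflation i' ((hp'.isoIsPushout _ _ hp).inv ≫ k) :=
    E.conflation_iso (Iso.refl _) (hp'.isoIsPushout _ _ hp) (Iso.refl _) hk (by simp) (by simp)
  have hi : i ≫ d = f ≫ 0 := by rw [E.comp_zero h]; simp
  refine ⟨hp.desc d 0 hi, ?_, by simp⟩
  refine confl_of_cokernel h1 _ (by simp) ⟨fun a b hab => ?_⟩ ?_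
  · have := congrArg (fun z => f' ≫ z) hab
    simp only [← Category.assoc, hp.inl_desc] at this
    rwa [cancel_epi] at this
  · intro T u hu
    obtain ⟨v, hv⟩ := confl_desc h (f' ≫ u) (by rw [← Category.assoc, hp.w, Category.assoc, hu]; simp)
    exact ⟨v, hp.hom_ext (by simp [hv]) (by simp [hu])⟩

theorem confl_retraction {A B C : 𝒜} {i : A ⟶ B} {d : B ⟶ C} (h : E.conflation i d)
    (s : C ⟶ B) (hs : s ≫ d = 𝟙 C) : ∃ r : B ⟶ A, i ≫ r = 𝟙 A ∧ r ≫ i = 𝟙 B - d ≫ s := by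
  have := confl_mono h
  obtain ⟨r, hr⟩ := confl_lift h (𝟙 B - d ≫ s) (by simp [hs])
  refine ⟨r, ?_, hr⟩
  rw [← cancel_mono i, Category.assoc, hr, Preadditive.comp_sub, reassoc_of% (E.comp_zero h)]
  simp

theorem confl_section {A B C : 𝒜} {i : A ⟶ B} {d : B ⟶ C} (h : E.conflation i d)
    (r : B ⟶ A) (hr : i ≫ r = 𝟙 A) : ∃ s : C ⟶ B, s ≫ d = 𝟙 C ∧ d ≫ s = 𝟙 B - r ≫ i := by
  have := confl_epi h
  obtain ⟨s, hs⟩ := confl_desc h (𝟙 B - r ≫ i) (by simp [reassoc_of% hr])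
  refine ⟨s, ?_, hs⟩
  rw [← cancel_epi d, reassoc_of% hs, Preadditive.sub_comp, Category.assoc, E.comp_zero h]
  simp

theorem confl_inl (hwic : IsWIC E) (A B : 𝒜) :
    E.conflation (biprod.inl : A ⟶ A ⊞ B) (biprod.snd : A ⊞ B ⟶ B) := by
  obtain ⟨K, k, hk⟩ := hwic (biprod.snd : A ⊞ B ⟶ B) biprod.inr (by simp)
  refine confl_of_kernel hk _ (by simp) inferInstance ?_
  intro T u hu
  exact ⟨u ≫ biprod.fst, by ext <;> simp [hu]⟩

theorem confl_inr (hwic : IsWIC E) (A B : 𝒜) :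
    E.conflation (biprod.inr : B ⟶ A ⊞ B) (biprod.fst : A ⊞ B ⟶ A) := by
  obtain ⟨K, k, hk⟩ := hwic (biprod.fst : A ⊞ B ⟶ A) biprod.inl (by simp)
  refine confl_of_kernel hk _ (by simp) inferInstance ?_
  intro T u hu
  exact ⟨u ≫ biprod.snd, by ext <;> simp [hu]⟩

/-- If `g ≫ s` is an inflation and `s` is the section of a deflation, then `g` is an inflation,
and its cokernel is a retract of that of `g ≫ s`. -/
theorem infl_of_comp_split (hwic : IsWIC E) {A B Z Q : 𝒜} (g : A ⟶ B) (s : B ⟶ Z) (p : Z ⟶ B)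
    (hsp : s ≫ p = 𝟙 B) {d : Z ⟶ Q} (h : E.conflation (g ≫ s) d) :
    ∃ (M : 𝒜) (e : B ⟶ M) (m : M ⟶ Q) (n : Q ⟶ M), E.conflation g e ∧ m ≫ n = 𝟙 M := by
  obtain ⟨K, k, hk⟩ := hwic p s hsp
  obtain ⟨π, hkπ, hπk⟩ := confl_retraction hk s hsp
  have := confl_mono hk
  have hgs := confl_mono h
  have hsπ : s ≫ π = 0 := by
    rw [← cancel_mono k, Category.assoc, hπk]; simp [reassoc_of% hsp]
  obtain ⟨ρ, hρ⟩ := confl_desc h π (by simp [hsπ])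
  have hkdρ : (k ≫ d) ≫ ρ = 𝟙 K := by rw [Category.assoc, hρ, hkπ]
  obtain ⟨M, m, hm⟩ := hwic ρ (k ≫ d) hkdρ
  have hmm := confl_mono hm
  obtain ⟨n, hmn, -⟩ := confl_retraction hm _ hkdρ
  obtain ⟨e, he⟩ := confl_lift hm (s ≫ d) (by rw [Category.assoc, hρ, hsπ])
  have hpb : IsPullback s e d m := by
    refine ⟨⟨he.symm⟩, ⟨PullbackCone.IsLimit.mk _ (fun c => c.fst ≫ p) ?_ ?_ ?_⟩⟩
    · intro c
      have h1 : c.fst ≫ π = 0 := by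
        rw [← hρ, reassoc_of% c.condition, E.comp_zero hm, comp_zero]
      have h2 : c.fst ≫ π ≫ k = 0 := by rw [reassoc_of% h1, zero_comp]
      rw [hπk, Preadditive.comp_sub, Category.comp_id, sub_eq_zero] at h2
      rw [Category.assoc, ← h2]
    · intro c
      have h1 : c.fst ≫ π = 0 := by
        rw [← hρ, reassoc_of% c.condition, E.comp_zero hm, comp_zero]
      have h2 : c.fst ≫ π ≫ k = 0 := by rw [reassoc_of% h1, zero_comp]
      rw [hπk, Preadditive.comp_sub, Category.comp_id, sub_eq_zero] at h2
      rw [← cancel_mono m, Category.assoc, he, Category.assoc, ← c.condition]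
      conv_rhs => rw [h2]
      simp
    · intro c l h1 h2
      rw [← h1, Category.assoc, hsp, Category.comp_id]
  obtain ⟨κ, hκ, hκs⟩ := confl_pullback h hpb
  refine ⟨M, e, m, n, ?_, hmn⟩
  have : SplitMono s := ⟨p, hsp⟩
  have hms : Mono s := mono_of_mono_fac hsp
  rw [cancel_mono] at hκs
  rwa [hκs] at hκ

/-- The dual: if `s ≫ f` is a deflation and `s` is a split epi then `f` is a deflation. -/
theorem defl_of_comp_split (hwic : IsWIC E) {Z A B L : 𝒜} (s : Z ⟶ A) (f : A ⟶ B) (j : A ⟶ Z)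
    (hjs : j ≫ s = 𝟙 A) {κ : L ⟶ Z} (h : E.conflation κ (s ≫ f)) :
    ∃ (M : 𝒜) (e : M ⟶ A) (m : M ⟶ L) (n : L ⟶ M), E.conflation e f ∧ m ≫ n = 𝟙 M := by
  obtain ⟨N, k, hk⟩ := hwic s j hjs
  obtain ⟨ρ, hkρ, hρk⟩ := confl_retraction hk j hjs
  have := confl_epi hk
  obtain ⟨σ, hσ⟩ := confl_lift h k (by rw [reassoc_of% (E.comp_zero hk), zero_comp])
  have hσκρ : σ ≫ (κ ≫ ρ) = 𝟙 N := by rw [reassoc_of% hσ, hkρ]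
  obtain ⟨M, m, hm⟩ := hwic (κ ≫ ρ) σ hσκρ
  obtain ⟨n, hmn, hnm⟩ := confl_retraction hm _ hσκρ
  have hmm := confl_mono hm
  have hσn : σ ≫ n = 0 := by
    rw [← cancel_mono m, Category.assoc, hnm, Preadditive.comp_sub, ← Category.assoc σ, hσκρ]; simp
  have hκs : κ ≫ s = n ≫ (m ≫ κ ≫ s) := by
    rw [reassoc_of% hnm, Preadditive.sub_comp]
    simp only [Category.assoc, Category.id_comp]
    rw [reassoc_of% hσ, E.comp_zero hk]; simp
  have hpo : IsPushout κ n s (m ≫ κ ≫ s) := by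
    have key : ∀ c : PushoutCocone κ n, s ≫ j ≫ c.inl = c.inl := by
      intro c
      have h1 : k ≫ c.inl = 0 := by
        rw [← hσ, Category.assoc, c.condition, reassoc_of% hσn, zero_comp]
      have h2 : ρ ≫ k ≫ c.inl = 0 := by rw [h1, comp_zero]
      rw [reassoc_of% hρk, Preadditive.sub_comp, Category.id_comp, sub_eq_zero] at h2
      rw [← Category.assoc]; exact h2.symm
    refine ⟨⟨hκs⟩, ⟨PushoutCocone.IsColimit.mk _ (fun c => j ≫ c.inl) key ?_ ?_⟩⟩
    · intro c
      simp only [Category.assoc]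
      rw [key c, c.condition, reassoc_of% hmn]
    · intro c l h1 h2
      rw [← h1, reassoc_of% hjs]
  obtain ⟨q, hq, hqs⟩ := confl_pushout h hpo
  have hqf : q = f := (cancel_epi s).1 hqs
  subst hqf
  exact ⟨M, m ≫ κ ≫ s, m, n, hq, hmn⟩

theorem defl_desc (hwic : IsWIC E) {A C B K : 𝒜} (g : A ⟶ B) (q : C ⟶ B) {k : K ⟶ C}
    (h : E.conflation k q) : IsDeflation E (biprod.desc g q) := by
  have hpb : IsPullback (biprod.snd : A ⊞ C ⟶ C) (biprod.map (𝟙 A) q) q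
      (biprod.snd : A ⊞ B ⟶ B) := by
    refine ⟨⟨by simp⟩, ⟨PullbackCone.IsLimit.mk _
      (fun c => biprod.lift (c.snd ≫ biprod.fst) c.fst) ?_ ?_ ?_⟩⟩
    · intro c; simp
    · intro c
      have := c.condition
      ext <;> simp [this]
    · intro c l h1 h2
      ext
      · simp [← h2]
      · simp [← h1]
  obtain ⟨_, h1, -⟩ := confl_pullback h hpb
  obtain ⟨_, _, h2⟩ := hwic (biprod.desc g (𝟙 B)) biprod.inr (by simp)
  obtain ⟨K', k', h3⟩ := E.deflation_comp h1 h2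
  refine ⟨K', k', ?_⟩
  convert h3 using 1
  ext <;> simp

theorem defl_of_comp (hwic : IsWIC E) {C A B : 𝒜} (a : C ⟶ A) (g : A ⟶ B)
    (h : IsDeflation E (a ≫ g)) : IsDeflation E g := by
  obtain ⟨K, k, hk⟩ := h
  obtain ⟨L, l, hl⟩ := defl_desc hwic g _ hk
  have e : biprod.desc g (a ≫ g) = biprod.desc (𝟙 A) a ≫ g := by ext <;> simp
  rw [e] at hl
  obtain ⟨M, e, _, _, h1, -⟩ := defl_of_comp_split hwic _ g biprod.inl (by simp) hl
  exact ⟨M, e, h1⟩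

theorem infl_lift {A B C Q : 𝒜} (f : A ⟶ B) (i : A ⟶ C) {d : C ⟶ Q}
    (h : E.conflation i d) : IsInflation E (biprod.lift f i) := by
  have := confl_mono h
  obtain ⟨D, y, j, _, _, hpo, -⟩ := E.pushout_inflation h (-f)
  obtain ⟨q, hq, hyq⟩ := confl_pushout h hpo
  have hj := confl_mono hq
  have hpb : IsPullback (biprod.snd : B ⊞ C ⟶ C) (biprod.desc j y) d q := by
    have key : ∀ c : PullbackCone d q, ∃ w, w ≫ j = c.snd - c.fst ≫ y := fun c =>
      confl_lift hq _ (by simp [hyq, c.condition])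
    choose w hw using key
    refine ⟨⟨by ext <;> simp [hyq, E.comp_zero hq]⟩, ⟨PullbackCone.IsLimit.mk _
      (fun c => biprod.lift (w c) c.fst) ?_ ?_ ?_⟩⟩
    · intro c; simp
    · intro c
      simp [hw]
    · intro c l h1 h2
      ext
      · rw [← cancel_mono j]
        have h3 : l = biprod.lift (l ≫ biprod.fst) (l ≫ biprod.snd) := by ext <;> simp
        rw [h3] at h2
        simp only [biprod.lift_desc] at h2
        simp only [biprod.lift_fst]
        rw [hw, ← h2, h1]; simp
      · simpa using h1
  obtain ⟨κ, hκ, hκi⟩ := confl_pullback h hpb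
  refine ⟨D, biprod.desc j y, ?_⟩
  convert hκ using 1
  ext
  · rw [← cancel_mono j]
    have h0 := E.comp_zero hκ
    have h3 : κ = biprod.lift (κ ≫ biprod.fst) (κ ≫ biprod.snd) := by ext <;> simp
    rw [h3] at h0
    simp only [biprod.lift_desc, hκi] at h0
    have hw := hpo.w
    rw [hw] at h0
    simp only [Preadditive.neg_comp] at h0
    simp only [biprod.lift_fst]
    exact (sub_eq_zero.1 (by rw [sub_eq_add_neg]; exact h0)).symm
  · simp [hκi]

end ExactLemmas

section Cotorsion

variable {E : ExactStructure 𝒜} {X Y : Set 𝒜}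

theorem ext_Y (hcp : IsCotorsionPair E X Y) {U V Q B : 𝒜} {i : U ⟶ V} {d : V ⟶ Q}
    (h : E.conflation i d) (hQ : Q ∈ X) (hB : B ∈ Y) (g : U ⟶ B) : ∃ g' : V ⟶ B, i ≫ g' = g := by
  obtain ⟨D, y, j, _, _, hpo, -⟩ := E.pushout_inflation h g
  obtain ⟨q, hq, -⟩ := confl_pushout h hpo
  obtain ⟨r, hr⟩ := (hcp.1 Q).1 hQ B hB _ _ hq
  exact ⟨y ≫ r, by rw [reassoc_of% hpo.w, hr, Category.comp_id]⟩

theorem lift_X (hcp : IsCotorsionPair E X Y) {K A B Q : 𝒜} {k : K ⟶ A} {p : A ⟶ B}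
    (h : E.conflation k p) (hK : K ∈ Y) (hQ : Q ∈ X) (g : Q ⟶ B) : ∃ g' : Q ⟶ A, g' ≫ p = g := by
  obtain ⟨D, y, j, _, _, hpb, -⟩ := E.pullback_deflation h g
  obtain ⟨q, hq, -⟩ := confl_pullback h hpb
  obtain ⟨r, hr⟩ := (hcp.1 Q).1 hQ K hK _ _ hq
  obtain ⟨s, hs, -⟩ := confl_section hq r hr
  exact ⟨s ≫ y, by rw [Category.assoc, hpb.w, reassoc_of% hs]⟩

theorem lifting (hcp : IsCotorsionPair E X Y) {A B Q S T K : 𝒜} {i : A ⟶ B} {d : B ⟶ Q}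
    {k : K ⟶ S} {p : S ⟶ T} (hi : E.conflation i d) (hQ : Q ∈ X) (hp : E.conflation k p)
    (hK : K ∈ Y) (a : A ⟶ S) (b : B ⟶ T) (w : a ≫ p = i ≫ b) :
    ∃ s : B ⟶ S, i ≫ s = a ∧ s ≫ p = b := by
  obtain ⟨P, y, π, _, _, hpb, -⟩ := E.pullback_deflation hp b
  obtain ⟨κ, hκ, -⟩ := confl_pullback hp hpb
  have hκm := confl_mono hκ
  have him := confl_mono hi
  have hπe := confl_epi hκ
  obtain ⟨α, hα1, hα2⟩ : ∃ α : A ⟶ P, α ≫ y = a ∧ α ≫ π = i :=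
    ⟨hpb.lift a i w, by simp, by simp⟩
  obtain ⟨_, _, h1⟩ := E.deflation_comp hκ hi
  have hc : E.conflation (biprod.desc α κ) (π ≫ d) := by
    refine confl_of_kernel h1 _ ?_ ?_ ?_
    · ext
      · simp [reassoc_of% hα2, E.comp_zero hi]
      · simp [reassoc_of% (E.comp_zero hκ)]
    · refine Preadditive.mono_of_cancel_zero _ (fun {G} g hg => ?_)
      have h3 : g = biprod.lift (g ≫ biprod.fst) (g ≫ biprod.snd) := by ext <;> simp
      rw [h3, biprod.lift_desc] at hg
      have h4 : g ≫ biprod.fst = 0 := by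
        have := congrArg (fun z => z ≫ π) hg
        simp only [Preadditive.add_comp, Category.assoc, hα2, E.comp_zero hκ, comp_zero,
          add_zero, zero_comp] at this
        rw [← cancel_mono i, Category.assoc, this, zero_comp]
      rw [h4, zero_comp, zero_add] at hg
      have h5 : g ≫ biprod.snd = 0 := by rw [← cancel_mono κ, hg, zero_comp]
      rw [h3, h4, h5]; ext <;> simp
    · intro T u hu
      obtain ⟨v, hv⟩ := confl_lift hi (u ≫ π) (by simpa using hu)
      obtain ⟨x, hx⟩ := confl_lift hκ (u - v ≫ α) (by simp [hα2, hv])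
      exact ⟨biprod.lift v x, by simp [hx]⟩
  obtain ⟨r, hr⟩ := ext_Y hcp hc hQ hK biprod.snd
  have hr1 : α ≫ r = 0 := by simpa using congrArg (fun z => biprod.inl ≫ z) hr
  have hr2 : κ ≫ r = 𝟙 K := by simpa using congrArg (fun z => biprod.inr ≫ z) hr
  obtain ⟨s, hs1, hs2⟩ := confl_section hκ r hr2
  refine ⟨s ≫ y, ?_, by rw [Category.assoc, hpb.w, reassoc_of% hs1]⟩
  rw [← hα2, Category.assoc, reassoc_of% hs2, Preadditive.sub_comp, Preadditive.comp_sub,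
    Category.assoc, reassoc_of% hr1]
  simp [hα1]

theorem Y_retract (hcp : IsCotorsionPair E X Y) {A B : 𝒜} (i : A ⟶ B) (r : B ⟶ A)
    (h : i ≫ r = 𝟙 A) (hB : B ∈ Y) : A ∈ Y := by
  refine (hcp.2 A).2 (fun Q hQ M j d hj => ?_)
  obtain ⟨g, hg⟩ := ext_Y hcp hj hQ hB i
  exact ⟨g ≫ r, by rw [reassoc_of% hg, h]⟩

theorem X_retract (hcp : IsCotorsionPair E X Y) {A B : 𝒜} (i : A ⟶ B) (r : B ⟶ A)
    (h : i ≫ r = 𝟙 A) (hB : B ∈ X) : A ∈ X := by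
  refine (hcp.1 A).2 (fun Q hQ M j d hj => ?_)
  obtain ⟨g, hg⟩ := lift_X hcp hj hQ hB r
  obtain ⟨t, ht, -⟩ := confl_retraction hj (i ≫ g) (by rw [Category.assoc, hg, h])
  exact ⟨t, ht⟩

theorem Y_ext (hcp : IsCotorsionPair E X Y) {A B C : 𝒜} {i : A ⟶ B} {d : B ⟶ C}
    (h : E.conflation i d) (hA : A ∈ Y) (hC : C ∈ Y) : B ∈ Y := by
  refine (hcp.2 B).2 (fun Q hQ M j e hj => ?_)
  obtain ⟨g, hg⟩ := ext_Y hcp hj hQ hC d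
  obtain ⟨s, hs, -⟩ := lifting hcp hj hQ h hA (𝟙 B) g (by simp [hg])
  exact ⟨s, hs⟩

theorem X_ext (hcp : IsCotorsionPair E X Y) {A B C : 𝒜} {i : A ⟶ B} {d : B ⟶ C}
    (h : E.conflation i d) (hA : A ∈ X) (hC : C ∈ X) : B ∈ X := by
  refine (hcp.1 B).2 (fun Q hQ M j e hj => ?_)
  obtain ⟨g, hg⟩ := lift_X hcp hj hQ hA i
  obtain ⟨s, -, hs⟩ := lifting hcp h hC hj hQ g (𝟙 B) (by simp [hg])
  obtain ⟨t, ht, -⟩ := confl_retraction hj s hs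
  exact ⟨t, ht⟩

theorem omega_biprod (hwic : IsWIC E) (hcp : IsCotorsionPair E X Y) {A B : 𝒜}
    (hA : A ∈ X ∩ Y) (hB : B ∈ X ∩ Y) : (A ⊞ B) ∈ X ∩ Y :=
  ⟨X_ext hcp (confl_inl hwic A B) hA.1 hB.1, Y_ext hcp (confl_inl hwic A B) hA.2 hB.2⟩

theorem TFib_comp (hcp : IsCotorsionPair E X Y) {A B C : 𝒜} (f : A ⟶ B) (g : B ⟶ C)
    (hf : TFibO E Y f) (hg : TFibO E Y g) : TFibO E Y (f ≫ g) := by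
  obtain ⟨K, k, hk, hK⟩ := hf
  obtain ⟨L, l, hl, hL⟩ := hg
  obtain ⟨M, m, hm⟩ := E.deflation_comp hk hl
  have hlm := confl_mono hl
  have hmm := confl_mono hm
  obtain ⟨e, he⟩ := confl_lift hl (m ≫ f) (by simpa using E.comp_zero hm)
  have hpb : IsPullback m e f l := by
    have key : ∀ c : PullbackCone f l, ∃ w, w ≫ m = c.fst := fun c =>
      confl_lift hm _ (by rw [reassoc_of% c.condition, E.comp_zero hl, comp_zero])
    choose w hw using key
    refine ⟨⟨he.symm⟩, ⟨PullbackCone.IsLimit.mk _ w hw ?_ ?_⟩⟩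
    · intro c
      rw [← cancel_mono l, Category.assoc, he, reassoc_of% hw, c.condition]
    · intro c l' h1 h2
      rw [← cancel_mono m, hw, h1]
  obtain ⟨n, hn, -⟩ := confl_pullback hk hpb
  exact ⟨M, m, hm, Y_ext hcp hn hK hL⟩

theorem cofib_tfib_fact (hwic : IsWIC E) (hcp : IsCotorsionPair E X Y)
    (hcomp : IsCompleteCP E X Y) {A B : 𝒜} (f : A ⟶ B) :
    ∃ (Z : 𝒜) (j : A ⟶ Z) (q : Z ⟶ B), j ≫ q = f ∧ CoFibO E X j ∧ TFibO E Y q := by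
  obtain ⟨-, Y₁, X₁, i, d, hi, -, hY₁⟩ := hcomp A
  obtain ⟨C, c, hc⟩ := infl_lift f i hi
  obtain ⟨⟨Y₂, X₂, y, r, hr, hX₂, hY₂⟩, -⟩ := hcomp C
  obtain ⟨Z, c', r', _, _, hpb, -⟩ := E.pullback_deflation hr c
  obtain ⟨_, hr', -⟩ := confl_pullback hr hpb
  obtain ⟨j, hj, hjf⟩ := confl_pullback hc hpb.flip
  refine ⟨Z, j, r' ≫ biprod.fst, ?_, ⟨_, _, hj, hX₂⟩, ?_⟩
  · rw [reassoc_of% hjf]; simp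
  · exact TFib_comp hcp _ _ ⟨_, _, hr', hY₂⟩ ⟨_, _, confl_inr hwic B Y₁, hY₁⟩

/-- The morphism factors through an object of the class `ω`. -/
def Thru (ω : Set 𝒜) {A B : 𝒜} (f : A ⟶ B) : Prop :=
  ∃ (W : 𝒜) (a : A ⟶ W) (b : W ⟶ B), W ∈ ω ∧ a ≫ b = f

theorem Thru.comp {ω : Set 𝒜} {A B C : 𝒜} {f : A ⟶ B} (h : Thru ω f) (g : B ⟶ C) :
    Thru ω (f ≫ g) := by
  obtain ⟨W, a, b, hW, rfl⟩ := h
  exact ⟨W, a, b ≫ g, hW, by simp⟩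

theorem Thru.sub (hwic : IsWIC E) (hcp : IsCotorsionPair E X Y) {A B : 𝒜} {f g : A ⟶ B}
    (h : Thru (X ∩ Y) f) (h' : Thru (X ∩ Y) g) : Thru (X ∩ Y) (f - g) := by
  obtain ⟨W, a, b, hW, rfl⟩ := h
  obtain ⟨W', a', b', hW', rfl⟩ := h'
  exact ⟨W ⊞ W', biprod.lift a a', biprod.desc b (-b'), omega_biprod hwic hcp hW hW', by
    simp [sub_eq_add_neg]⟩

theorem Thru.add (hwic : IsWIC E) (hcp : IsCotorsionPair E X Y) {A B : 𝒜} {f g : A ⟶ B}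
    (h : Thru (X ∩ Y) f) (h' : Thru (X ∩ Y) g) : Thru (X ∩ Y) (f + g) := by
  obtain ⟨W, a, b, hW, rfl⟩ := h
  obtain ⟨W', a', b', hW', rfl⟩ := h'
  exact ⟨W ⊞ W', biprod.lift a a', biprod.desc b b', omega_biprod hwic hcp hW hW', by simp⟩

/-- `f` induces bijections on stable Hom groups (modulo `ω`) out of objects of `X`. -/
def SIso (X ω : Set 𝒜) {A B : 𝒜} (f : A ⟶ B) : Prop :=
  (∀ T ∈ X, ∀ b : T ⟶ B, ∃ a : T ⟶ A, Thru ω (b - a ≫ f)) ∧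
  (∀ T ∈ X, ∀ a : T ⟶ A, Thru ω (a ≫ f) → Thru ω a)

theorem SIso.comp (hwic : IsWIC E) (hcp : IsCotorsionPair E X Y) {A B C : 𝒜} {f : A ⟶ B}
    {g : B ⟶ C} (hf : SIso X (X ∩ Y) f) (hg : SIso X (X ∩ Y) g) : SIso X (X ∩ Y) (f ≫ g) := by
  refine ⟨fun T hT c => ?_, fun T hT a ha => hf.2 T hT a (hg.2 T hT _ (by simpa using ha))⟩
  obtain ⟨b, hb⟩ := hg.1 T hT c
  obtain ⟨a, ha⟩ := hf.1 T hT b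
  refine ⟨a, ?_⟩
  have := Thru.add hwic hcp hb (ha.comp g)
  convert this using 1
  simp

theorem SIso.cancel_left (hwic : IsWIC E) (hcp : IsCotorsionPair E X Y) {A B C : 𝒜} {f : A ⟶ B}
    {g : B ⟶ C} (hf : SIso X (X ∩ Y) f) (hg : SIso X (X ∩ Y) (f ≫ g)) : SIso X (X ∩ Y) g := by
  refine ⟨fun T hT c => ?_, fun T hT b hb => ?_⟩
  · obtain ⟨a, ha⟩ := hg.1 T hT c
    exact ⟨a ≫ f, by simpa using ha⟩
  · obtain ⟨a, ha⟩ := hf.1 T hT b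
    have h1 := hg.2 T hT a (by
      have := Thru.sub hwic hcp hb (ha.comp g)
      convert this using 1
      simp)
    have := Thru.add hwic hcp ha (h1.comp f)
    simpa using this

theorem SIso.cancel_right {ω : Set 𝒜} {A B C : 𝒜} {f : A ⟶ B}
    {g : B ⟶ C} (hg : SIso X ω g) (hfg : SIso X ω (f ≫ g)) : SIso X ω f := by
  refine ⟨fun T hT b => ?_, fun T hT a ha => hfg.2 T hT a (by simpa using ha.comp g)⟩
  obtain ⟨a, ha⟩ := hfg.1 T hT (b ≫ g)
  exact ⟨a, hg.2 T hT _ (by simpa using ha)⟩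

theorem SIso.retract {ω : Set 𝒜} {A' B' A B : 𝒜} {g : A' ⟶ B'} {f : A ⟶ B}
    (h : IsRetractMor g f) (hf : SIso X ω f) : SIso X ω g := by
  obtain ⟨φ₁, ψ₁, φ₂, ψ₂, h1, h2, h3, h4⟩ := h
  refine ⟨fun T hT b => ?_, fun T hT a ha => ?_⟩
  · obtain ⟨a, ha⟩ := hf.1 T hT (b ≫ φ₂)
    refine ⟨a ≫ ψ₁, ?_⟩
    have := ha.comp ψ₂
    simpa [h2, h4] using this
  · have := hf.2 T hT (a ≫ φ₁) (by
      have := ha.comp φ₂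
      simpa [h3] using this)
    simpa [h1] using this.comp ψ₁

theorem exists_hull (hcp : IsCotorsionPair E X Y) (hcomp : IsCompleteCP E X Y) {T : 𝒜}
    (hT : T ∈ X) : ∃ (W Q : 𝒜) (j : T ⟶ W) (c : W ⟶ Q), E.conflation j c ∧ W ∈ X ∩ Y ∧ Q ∈ X := by
  obtain ⟨-, W, Q, j, c, h, hQ, hW⟩ := hcomp T
  exact ⟨W, Q, j, c, h, ⟨X_ext hcp h hT hQ, hW⟩, hQ⟩

theorem thru_of_Y (hcp : IsCotorsionPair E X Y) (hcomp : IsCompleteCP E X Y) {T K : 𝒜}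
    (hT : T ∈ X) (hK : K ∈ Y) (g : T ⟶ K) : Thru (X ∩ Y) g := by
  obtain ⟨W, Q, j, c, h, hW, hQ⟩ := exists_hull hcp hcomp hT
  obtain ⟨g', hg'⟩ := ext_Y hcp h hQ hK g
  exact ⟨W, j, g', hW, hg'⟩

theorem SIso.of_tfib (hwic : IsWIC E) (hcp : IsCotorsionPair E X Y) (hcomp : IsCompleteCP E X Y)
    {A B : 𝒜} {p : A ⟶ B} (hp : TFibO E Y p) : SIso X (X ∩ Y) p := by
  obtain ⟨K, k, hk, hK⟩ := hp
  refine ⟨fun T hT b => ?_, fun T hT a ha => ?_⟩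
  · obtain ⟨a, ha⟩ := lift_X hcp hk hK hT b
    refine ⟨a, ?_⟩
    have := (thru_of_Y hcp hcomp hT hK (0 : T ⟶ K)).comp (0 : K ⟶ B)
    simpa [ha] using this
  · obtain ⟨W, x, y, hW, hxy⟩ := ha
    obtain ⟨z, hz⟩ := lift_X hcp hk hK hW.1 y
    obtain ⟨u, hu⟩ := confl_lift hk (a - x ≫ z) (by simp [hz, hxy])
    have h1 := (thru_of_Y hcp hcomp hT hK u).comp k
    have h2 : Thru (X ∩ Y) (x ≫ z) := ⟨W, x, z, hW, rfl⟩
    have := Thru.add hwic hcp h1 h2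
    simpa [hu] using this

theorem SIso.of_tcofib {A B : 𝒜} {ω : Set 𝒜} {i : A ⟶ B} (hi : TCoFibO E ω i) : SIso X ω i := by
  obtain ⟨⟨r, hr⟩, Q, d, hd, hQ⟩ := hi
  obtain ⟨s, hs, hds⟩ := confl_section hd r hr
  refine ⟨fun T hT b => ⟨b ≫ r, Q, b ≫ d, s, hQ, by simp [hds]⟩, fun T hT a ha => ?_⟩
  simpa [hr] using ha.comp r

theorem tcofib_inl (hwic : IsWIC E) {ω : Set 𝒜} (A : 𝒜) {W : 𝒜} (hW : W ∈ ω) :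
    TCoFibO E ω (biprod.inl : A ⟶ A ⊞ W) :=
  ⟨⟨biprod.fst, by simp⟩, W, biprod.snd, confl_inl hwic A W, hW⟩

theorem SIso.of_weq (hwic : IsWIC E) (hcp : IsCotorsionPair E X Y) (hcomp : IsCompleteCP E X Y)
    {A B : 𝒜} {f : A ⟶ B} (hf : WeqO E (X ∩ Y) Y f) : SIso X (X ∩ Y) f := by
  obtain ⟨W, hW, t, K, k, hk, hK⟩ := hf
  have h1 : SIso X (X ∩ Y) (biprod.inl : A ⟶ A ⊞ W) := SIso.of_tcofib (tcofib_inl hwic A hW)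
  have h2 := SIso.of_tfib hwic hcp hcomp ⟨K, k, hk, hK⟩
  simpa using SIso.comp hwic hcp h1 h2

theorem SIso.weq (hwic : IsWIC E) (hcp : IsCotorsionPair E X Y) (hcomp : IsCompleteCP E X Y)
    (hher : IsHereditaryCP E X Y) (hcf : IsContravariantlyFinite (X ∩ Y))
    {A B : 𝒜} {f : A ⟶ B} (hf : SIso X (X ∩ Y) f) : WeqO E (X ∩ Y) Y f := by
  obtain ⟨⟨_, X₀, _, q, hq, hX₀, -⟩, -⟩ := hcomp B
  obtain ⟨a, W, w, t, hW, hwt⟩ := hf.1 X₀ hX₀ q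
  obtain ⟨W₁, t₁, hW₁, ht₁⟩ := hcf B
  have hW' := omega_biprod hwic hcp hW hW₁
  obtain ⟨K, k, hk⟩ : IsDeflation E (biprod.desc f (biprod.desc t t₁)) := by
    have e : biprod.lift a (biprod.lift w 0) ≫ biprod.desc f (biprod.desc t t₁) = q := by
      simp [hwt]
    exact defl_of_comp hwic (biprod.lift a (biprod.lift w 0)) _ (e ▸ ⟨_, _, hq⟩)
  refine ⟨_, hW', _, K, k, hk, ?_⟩
  have hg : SIso X (X ∩ Y) (biprod.desc f (biprod.desc t t₁)) := by
    refine SIso.cancel_left hwic hcp (f := biprod.inl) (SIso.of_tcofib (tcofib_inl hwic A hW')) ?_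
    simpa using hf
  have hω : ∀ {S : 𝒜}, S ∈ X ∩ Y → ∀ b : S ⟶ B,
      ∃ c, c ≫ biprod.desc f (biprod.desc t t₁) = b := by
    intro S hS b
    obtain ⟨h, hh⟩ := ht₁ S hS b
    exact ⟨h ≫ biprod.inr ≫ biprod.inr, by simp [hh]⟩
  generalize biprod.desc f (biprod.desc t t₁) = g at hk hg hω
  have hsurj : ∀ {S : 𝒜}, S ∈ X → ∀ b : S ⟶ B, ∃ c, c ≫ g = b := by
    intro S hS b
    obtain ⟨c, V, x, y, hV, hxy⟩ := hg.1 S hS b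
    obtain ⟨z, hz⟩ := hω hV y
    exact ⟨c + x ≫ z, by simp [hz, hxy]⟩
  have hkm := confl_mono hk
  obtain ⟨⟨Y₁, X₁, y, u, hu, hX₁, hY₁⟩, -⟩ := hcomp K
  obtain ⟨W₀, X₂, j, c, hj, hW₀, hX₂⟩ := exists_hull hcp hcomp hX₁
  obtain ⟨W₂, w₂, v₂, hW₂, hwv⟩ := hg.2 X₁ hX₁ (u ≫ k)
    ⟨W₀, 0, 0, hW₀, by rw [Category.assoc, E.comp_zero hk]; simp⟩
  obtain ⟨w₂', hw₂'⟩ := ext_Y hcp hj hX₂ hW₂.2 w₂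
  obtain ⟨b, hb⟩ := confl_desc hj ((w₂' ≫ v₂) ≫ g) (by
    rw [← Category.assoc, reassoc_of% hw₂', hwv, Category.assoc, E.comp_zero hk, comp_zero])
  obtain ⟨b', hb'⟩ := hsurj hX₂ b
  obtain ⟨v, hv⟩ := confl_lift hk (w₂' ≫ v₂ - c ≫ b') (by
    rw [Preadditive.sub_comp, ← hb, Category.assoc, hb', sub_self])
  have hjv : j ≫ v = u := by
    rw [← cancel_mono k, Category.assoc, hv, Preadditive.comp_sub, reassoc_of% hw₂', hwv,
      reassoc_of% (E.comp_zero hj)]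
    simp
  obtain ⟨l, hl⟩ := lift_X hcp hu hY₁ hW₀.1 v
  obtain ⟨z, hz⟩ := confl_lift hu (𝟙 X₁ - j ≫ l) (by simp [hl, hjv])
  obtain ⟨z', hz'⟩ := ext_Y hcp hj hX₂ hY₁ z
  have hX₁Y : X₁ ∈ Y := Y_retract hcp j (l + z' ≫ y) (by
    rw [Preadditive.comp_add, reassoc_of% hz', hz]; simp) hW₀.2
  exact hher.2 y u hu hY₁ hX₁Y

theorem tcofib_of (hcp : IsCotorsionPair E X Y) {A B : 𝒜} {i : A ⟶ B} (hi : CoFibO E X i)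
    (hw : WeqO E (X ∩ Y) Y i) : TCoFibO E (X ∩ Y) i := by
  obtain ⟨Q, d, hd, hQ⟩ := hi
  obtain ⟨W, hW, t, K, k, hk, hK⟩ := hw
  obtain ⟨s, hs1, hs2⟩ := lifting hcp hd hQ hk hK biprod.inl (𝟙 B) (by simp)
  refine ⟨⟨s ≫ biprod.fst, by rw [reassoc_of% hs1]; simp⟩, Q, d, hd, hQ, ?_⟩
  have := confl_epi hd
  obtain ⟨m, hm⟩ := confl_desc hd (s ≫ biprod.snd) (by rw [reassoc_of% hs1]; simp)
  refine Y_retract hcp m (t ≫ d) ?_ hW.2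
  rw [← cancel_epi d, reassoc_of% hm]
  have h2 : biprod.snd ≫ t ≫ d = biprod.desc i t ≫ d := by
    ext <;> simp [E.comp_zero hd]
  rw [h2, reassoc_of% hs2, Category.comp_id]

theorem tfib_of (hwic : IsWIC E) (hcp : IsCotorsionPair E X Y) {A B : 𝒜} {f : A ⟶ B}
    (hf : FibO (X ∩ Y) f) (hw : WeqO E (X ∩ Y) Y f) : TFibO E Y f := by
  obtain ⟨W, hW, t, K, k, hk, hK⟩ := hw
  obtain ⟨h, hh⟩ := hf W hW t
  have e : biprod.desc f t = biprod.desc (𝟙 A) h ≫ f := by ext <;> simp [hh]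
  rw [e] at hk
  obtain ⟨M, e, m, n, h1, h2⟩ := defl_of_comp_split hwic _ f biprod.inl (by simp) hk
  exact ⟨M, e, h1, Y_retract hcp m n h2 hK⟩

theorem cofib_retract (hwic : IsWIC E) (hcp : IsCotorsionPair E X Y)
    (hcomp : IsCompleteCP E X Y) {A' B' A B : 𝒜} {g : A' ⟶ B'} {f : A ⟶ B}
    (h : IsRetractMor g f) (hf : CoFibO E X f) : CoFibO E X g := by
  obtain ⟨φ₁, ψ₁, φ₂, ψ₂, h1, h2, h3, h4⟩ := h
  obtain ⟨Q, d, hd, hQ⟩ := hf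
  obtain ⟨Z, i, p, hip, ⟨R, e, he, hR⟩, ⟨K, k, hk, hK⟩⟩ := cofib_tfib_fact hwic hcp hcomp g
  obtain ⟨s, hs1, hs2⟩ := lifting hcp hd hQ hk hK (ψ₁ ≫ i) ψ₂ (by rw [Category.assoc, hip, h4])
  have hi : g ≫ φ₂ ≫ s = i := by rw [← reassoc_of% h3, hs1, reassoc_of% h1]
  rw [← hi] at he
  obtain ⟨M, e', m, n, h5, h6⟩ := infl_of_comp_split hwic g (φ₂ ≫ s) p (by simp [hs2, h2]) he
  exact ⟨M, e', h5, X_retract hcp m n h6 hR⟩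

end Cotorsion

end OmegaModel

/-- Theorem 3.1 (the "if" part of the main theorem): a hereditary complete cotorsion
pair with contravariantly finite core induces the `ω`-model structure. -/
theorem stmt_0 (E : ExactStructure 𝒜) (hwic : IsWIC E) (X Y : Set 𝒜)
    (hcp : IsCotorsionPair E X Y) (hcomp : IsCompleteCP E X Y)
    (hher : IsHereditaryCP E X Y) (hcf : IsContravariantlyFinite (X ∩ Y)) :
    IsModelStructure (CoFibO E X) (FibO (X ∩ Y)) (WeqO E (X ∩ Y) Y) ∧
    (∀ {A B : 𝒜} (f : A ⟶ B),
      (CoFibO E X f ∧ WeqO E (X ∩ Y) Y f) ↔ TCoFibO E (X ∩ Y) f) ∧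
    (∀ {A B : 𝒜} (f : A ⟶ B),
      (FibO (X ∩ Y) f ∧ WeqO E (X ∩ Y) Y f) ↔ TFibO E Y f) := by
  have hWS : ∀ {A B : 𝒜} (f : A ⟶ B), WeqO E (X ∩ Y) Y f ↔ OmegaModel.SIso X (X ∩ Y) f :=
    fun f => ⟨OmegaModel.SIso.of_weq hwic hcp hcomp, OmegaModel.SIso.weq hwic hcp hcomp hher hcf⟩
  have hTC : ∀ {A B : 𝒜} (f : A ⟶ B),
      (CoFibO E X f ∧ WeqO E (X ∩ Y) Y f) ↔ TCoFibO E (X ∩ Y) f := by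
    intro A B f
    refine ⟨fun h => OmegaModel.tcofib_of hcp h.1 h.2, fun h => ⟨?_, ?_⟩⟩
    · obtain ⟨-, Z, d, hd, hZ⟩ := h
      exact ⟨Z, d, hd, hZ.1⟩
    · exact (hWS f).2 (OmegaModel.SIso.of_tcofib h)
  have hTF : ∀ {A B : 𝒜} (f : A ⟶ B),
      (FibO (X ∩ Y) f ∧ WeqO E (X ∩ Y) Y f) ↔ TFibO E Y f := by
    intro A B f
    refine ⟨fun h => OmegaModel.tfib_of hwic hcp h.1 h.2, fun h => ⟨?_, ?_⟩⟩
    · obtain ⟨K, k, hk, hK⟩ := h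
      exact fun W hW g => OmegaModel.lift_X hcp hk hK hW.1 g
    · exact (hWS f).2 (OmegaModel.SIso.of_tfib hwic hcp hcomp h)
  refine ⟨?_, hTC, hTF⟩
  constructor
  · intro A B C f g hf hg
    rw [hWS] at *
    exact hf.comp hwic hcp hg
  · intro A B C f g hf hg
    rw [hWS] at *
    exact hf.cancel_left hwic hcp hg
  · intro A B C f g hf hg
    rw [hWS] at *
    exact hf.cancel_right hg
  · intro A' B' A B g f h hf
    exact OmegaModel.cofib_retract hwic hcp hcomp h hf
  · rintro A' B' A B g f ⟨φ₁, ψ₁, φ₂, ψ₂, h1, h2, h3, h4⟩ hf W hW b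
    obtain ⟨a, ha⟩ := hf W hW (b ≫ φ₂)
    exact ⟨a ≫ ψ₁, by rw [Category.assoc, ← h4, reassoc_of% ha, h2, Category.comp_id]⟩
  · intro A' B' A B g f h hf
    rw [hWS] at *
    exact hf.retract h
  · intro A B S T i p a b hi hw hp hsq
    obtain ⟨⟨r, hr⟩, Q, d, hd, hQ⟩ := (hTC i).1 ⟨hi, hw⟩
    obtain ⟨s, hs, hds⟩ := OmegaModel.confl_section hd r hr
    obtain ⟨h, hh⟩ := hp Q hQ (s ≫ b)
    refine ⟨r ≫ a + d ≫ h, ?_, ?_⟩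
    · rw [Preadditive.comp_add, reassoc_of% hr, reassoc_of% (E.comp_zero hd)]
      simp
    · rw [Preadditive.add_comp, Category.assoc, hsq, Category.assoc, hh, reassoc_of% hds]
      simp
  · intro A B S T i p a b hi hp hw hsq
    obtain ⟨Q, d, hd, hQ⟩ := hi
    obtain ⟨K, k, hk, hK⟩ := (hTF p).1 ⟨hp, hw⟩
    exact OmegaModel.lifting hcp hd hQ hk hK a b hsq
  · intro A B f
    obtain ⟨W, t, hW, ht⟩ := hcf B
    obtain ⟨h1, h2⟩ := (hTC _).2 (OmegaModel.tcofib_inl hwic A hW)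
    refine ⟨A ⊞ W, biprod.inl, biprod.desc f t, by simp, h1, h2, fun V hV g => ?_⟩
    obtain ⟨h, hh⟩ := ht V hV g
    exact ⟨h ≫ biprod.inr, by simp [hh]⟩
  · intro A B f
    obtain ⟨Z, j, q, h, hj, hq⟩ := OmegaModel.cofib_tfib_fact hwic hcp hcomp f
    exact ⟨Z, j, q, h, hj, (hTF q).2 hq⟩
end

section
/- Let 𝒜 be a weakly idempotent complete exact category and let 𝒳,𝒴 be full additive subcategories of 𝒜 closed under isomorphisms and direct summands, with ω = 𝒳∩𝒴. If (CoFib_ω, Fib_ω, Weq_ω) is a closed model structure on 𝒜, then (𝒳,𝒴) is a hereditary complete cotorsion pair in 𝒜 and ω is contravariantly finite in 𝒜; moreover for this model structure the class of cofibrant objects is 𝒳, every object is fibrant, and the class of trivial objects is 𝒴. -/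
open CategoryTheory Limits ZeroObject

universe v u

variable {𝒜 : Type u} [Category.{v} 𝒜] [Preadditive 𝒜] [HasZeroObject 𝒜]
  [HasBinaryBiproducts 𝒜]

-- BEGIN HELPERS
namespace ExStr

lemma clift {E : ExactStructure 𝒜} {A B C : 𝒜} {i : A ⟶ B} {d : B ⟶ C}
    (h : E.conflation i d) {T : 𝒜} (z : T ⟶ B) (hz : z ≫ d = 0) : ∃ l : T ⟶ A, l ≫ i = z := by
  obtain ⟨hk⟩ := E.isKernel h
  exact ⟨hk.lift (KernelFork.ofι z hz), hk.fac (KernelFork.ofι z hz) WalkingParallelPair.zero⟩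

lemma cdesc {E : ExactStructure 𝒜} {A B C : 𝒜} {i : A ⟶ B} {d : B ⟶ C}
    (h : E.conflation i d) {T : 𝒜} (z : B ⟶ T) (hz : i ≫ z = 0) : ∃ l : C ⟶ T, d ≫ l = z := by
  obtain ⟨hk⟩ := E.isCokernel h
  exact ⟨hk.desc (CokernelCofork.ofπ z hz), hk.fac (CokernelCofork.ofπ z hz) WalkingParallelPair.one⟩

lemma cmono {E : ExactStructure 𝒜} {A B C : 𝒜} {i : A ⟶ B} {d : B ⟶ C}
    (h : E.conflation i d) : Mono i := by
  obtain ⟨hk⟩ := E.isKernel h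
  exact ⟨fun a b hab => Fork.IsLimit.hom_ext hk hab⟩

lemma cepi {E : ExactStructure 𝒜} {A B C : 𝒜} {i : A ⟶ B} {d : B ⟶ C}
    (h : E.conflation i d) : Epi d := by
  obtain ⟨hk⟩ := E.isCokernel h
  exact ⟨fun a b hab => Cofork.IsColimit.hom_ext hk hab⟩

lemma conf_of_coker {E : ExactStructure 𝒜} {A B C C' : 𝒜} {i : A ⟶ B} {d : B ⟶ C}
    (h : E.conflation i d) (d' : B ⟶ C') (h0 : i ≫ d' = 0) [Epi d']
    (hd : ∀ {T : 𝒜} (z : B ⟶ T), i ≫ z = 0 → ∃ l : C' ⟶ T, d' ≫ l = z) :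
    E.conflation i d' := by
  have := cepi h
  obtain ⟨a, ha⟩ := cdesc h d' h0
  obtain ⟨b, hb⟩ := hd d (E.comp_zero h)
  refine E.conflation_iso (Iso.refl _) (Iso.refl _)
    ⟨a, b, ?_, ?_⟩ h (by simp) (by simpa using ha)
  · rw [← cancel_epi d, ← Category.assoc, ha, hb]; simp
  · rw [← cancel_epi d', ← Category.assoc, hb, ha]; simp

lemma conf_of_ker {E : ExactStructure 𝒜} {A B C A' : 𝒜} {i : A ⟶ B} {d : B ⟶ C}
    (h : E.conflation i d) (i' : A' ⟶ B) (h0 : i' ≫ d = 0) [Mono i']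
    (hd : ∀ {T : 𝒜} (z : T ⟶ B), z ≫ d = 0 → ∃ l : T ⟶ A', l ≫ i' = z) :
    E.conflation i' d := by
  have := cmono h
  obtain ⟨a, ha⟩ := clift h i' h0
  obtain ⟨b, hb⟩ := hd i (E.comp_zero h)
  refine E.conflation_iso ⟨b, a, ?_, ?_⟩ (Iso.refl _) (Iso.refl _)
     h (by simpa using hb.symm) (by simp)
  · rw [← cancel_mono i, Category.assoc, ha, hb]; simp
  · rw [← cancel_mono i', Category.assoc, hb, ha]; simp

lemma conf_pushout {E : ExactStructure 𝒜} {A B C A' B' : 𝒜} {i : A ⟶ B} {d : B ⟶ C}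
    (h : E.conflation i d) {f : A ⟶ A'} {f' : B ⟶ B'} {i' : A' ⟶ B'}
    (hp : IsPushout i f f' i') : ∃ (Q : 𝒜) (q : B' ⟶ Q), E.conflation i' q := by
  obtain ⟨B'', f'', i'', Q, q, hp', hc⟩ := E.pushout_inflation h f
  refine ⟨Q, (hp.isoIsPushout _ _ hp').hom ≫ q, ?_⟩
  exact E.conflation_iso (Iso.refl _) (hp.isoIsPushout _ _ hp').symm (Iso.refl _) hc
    (by simp) (by simp)

lemma conf_pullback {E : ExactStructure 𝒜} {A B C C' B' : 𝒜} {i : A ⟶ B} {d : B ⟶ C}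
    (h : E.conflation i d) {f : C' ⟶ C} {f' : B' ⟶ B} {d' : B' ⟶ C'}
    (hp : IsPullback f' d' d f) :
    ∃ (i' : A ⟶ B'), E.conflation i' d' ∧ i' ≫ f' = i := by
  have := cmono h
  obtain ⟨B'', f'', d'', Q, q, hp', hc⟩ := E.pullback_deflation h f
  have hc' : E.conflation (q ≫ (hp'.isoIsPullback _ _ hp).hom) d' :=
    E.conflation_iso (Iso.refl _) (hp'.isoIsPullback _ _ hp) (Iso.refl _) hc
      (by simp) (by simp)
  have h0 : i ≫ d = 0 ≫ f := by rw [E.comp_zero h]; simp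
  have : Mono (hp.lift i (0 : A ⟶ C') h0) := by
    have : Mono (hp.lift i (0 : A ⟶ C') h0 ≫ f') := by rw [hp.lift_fst]; infer_instance
    exact mono_of_mono _ f'
  refine ⟨hp.lift i 0 h0, conf_of_ker hc' _ (hp.lift_snd _ _ _) ?_, hp.lift_fst _ _ _⟩
  intro T z hz
  obtain ⟨l, hl⟩ := clift h (z ≫ f') (by rw [Category.assoc, hp.w, reassoc_of% hz]; simp)
  refine ⟨l, hp.hom_ext ?_ ?_⟩
  · rw [Category.assoc, hp.lift_fst, hl]
  · rw [Category.assoc, hp.lift_snd, hz, comp_zero]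

/-- If `(f, s ≫ f)` is a deflation then so is `f`, and its kernel is a summand. -/
lemma cancel_defl {E : ExactStructure 𝒜} (hwic : IsWIC E) {A B W K : 𝒜} {f : A ⟶ B}
    (s : W ⟶ A) {k : K ⟶ A ⊞ W} (h : E.conflation k (biprod.desc f (s ≫ f))) :
    ∃ (K' : 𝒜) (k' : K' ⟶ A), E.conflation k' f ∧ ∃ (a : K' ⟶ K) (b : K ⟶ K'), a ≫ b = 𝟙 K' := by
  have := cmono h
  have := cepi h
  obtain ⟨σ, hσ⟩ := clift h (biprod.lift (-s) (𝟙 W)) (by simp [biprod.lift_desc])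
  have hsq : σ ≫ k ≫ biprod.snd = 𝟙 W := by rw [reassoc_of% hσ]; simp
  have hsf : σ ≫ k ≫ biprod.fst = -s := by rw [reassoc_of% hσ]; simp
  obtain ⟨K', κ, hκ⟩ := hwic (k ≫ biprod.snd) σ hsq
  have := cmono hκ
  have hκ0 := E.comp_zero hκ
  obtain ⟨r, hr⟩ := clift hκ (𝟙 K - (k ≫ biprod.snd) ≫ σ)
    (by rw [Preadditive.sub_comp, Category.assoc, hsq]; simp)
  have hκr : κ ≫ r = 𝟙 K' := by
    rw [← cancel_mono κ, Category.assoc, hr, Preadditive.comp_sub, Category.assoc, reassoc_of% hκ0]; simp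
  have hσr : σ ≫ r = 0 := by
    rw [← cancel_mono κ, Category.assoc, hr, Preadditive.comp_sub, Category.assoc, reassoc_of% hsq]; simp
  have hkin : κ ≫ k ≫ biprod.fst ≫ biprod.inl = κ ≫ k := by
    have : κ ≫ k = κ ≫ k ≫ (biprod.fst ≫ biprod.inl + biprod.snd ≫ biprod.inr) := by
      rw [biprod.total]; simp
    rw [this]
    simp only [Preadditive.comp_add]
    rw [show κ ≫ k ≫ biprod.snd ≫ biprod.inr = (κ ≫ k ≫ biprod.snd) ≫ biprod.inr by simp, hκ0]
    simp
  have hcomm : k ≫ biprod.desc (𝟙 A) s = r ≫ κ ≫ k ≫ biprod.fst := by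
    rw [reassoc_of% hr, Preadditive.sub_comp]
    simp only [Category.assoc, hsf, Category.id_comp, Preadditive.comp_neg, sub_neg_eq_add]
    rw [biprod.desc_eq]; simp
  have key : ∀ {T : 𝒜} (u : A ⊞ W ⟶ T), (σ ≫ k) ≫ u = 0 → 
      biprod.desc (𝟙 A) s ≫ biprod.inl ≫ u = u := by
    intro T u hu
    rw [hσ] at hu
    ext
    · simp
    · have : biprod.lift (-s) (𝟙 W) ≫ u = - (s ≫ biprod.inl ≫ u) + biprod.inr ≫ u := by
        rw [biprod.lift_eq]; simp
      rw [this] at hu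
      simp
      exact (neg_add_eq_zero.mp hu)
  have hpo : IsPushout k r (biprod.desc (𝟙 A) s) (κ ≫ k ≫ biprod.fst) := by
    refine ⟨⟨hcomm⟩, ⟨PushoutCocone.IsColimit.mk _ (fun c => biprod.inl ≫ c.inl) ?_ ?_ ?_⟩⟩
    · intro c
      apply key
      rw [Category.assoc, c.condition, reassoc_of% hσr]; simp
    · intro c
      simp only [Category.assoc]
      rw [reassoc_of% hkin, c.condition, reassoc_of% hκr]
    · intro c m h1 _
      rw [← h1]; simp
  obtain ⟨Q, q, hq⟩ := conf_pushout h hpo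
  have hg : biprod.desc f (s ≫ f) = biprod.desc (𝟙 A) s ≫ f := by ext <;> simp
  have : Epi f := by
    have : Epi (biprod.desc (𝟙 A) s ≫ f) := by rw [← hg]; infer_instance
    exact epi_of_epi (biprod.desc (𝟙 A) s) f
  refine ⟨K', κ ≫ k ≫ biprod.fst, conf_of_coker hq f ?_ ?_, κ, r, hκr⟩
  · have h0 := E.comp_zero h
    rw [hg, reassoc_of% hcomm] at h0
    have : κ ≫ r ≫ κ ≫ k ≫ biprod.fst ≫ f = 0 := by rw [h0]; simp
    rw [reassoc_of% hκr] at this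
    simpa using this
  · intro T z hz
    obtain ⟨l, hl⟩ := cdesc h (biprod.desc (𝟙 A) s ≫ z) (by
      rw [reassoc_of% hcomm]; simp only [Category.assoc] at hz; rw [hz]; simp)
    refine ⟨l, ?_⟩
    have := congrArg (fun t => biprod.inl ≫ t) hl
    simpa using this

/-- A pushout of a deflation `p` along an inflation `e`: exactness of the resulting column. -/
lemma push_defl {E : ExactStructure 𝒜} (hwic : IsWIC E) {L M K N C : 𝒜}
    {y : L ⟶ M} {p : M ⟶ K} (h : E.conflation y p) {e : M ⟶ N} {d : N ⟶ C}
    (h' : E.conflation e d) :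
    ∃ (P : 𝒜) (k : K ⟶ P) (c : N ⟶ P) (x : P ⟶ C), E.conflation (y ≫ e) c ∧
      E.conflation k x ∧ e ≫ c = p ≫ k ∧ c ≫ x = d := by
  have := cmono h
  have := cmono h'
  have := cepi h'
  have := cepi h
  obtain ⟨P, c, k, Q, q, hp, hk⟩ := E.pushout_inflation h' p
  have h0 : e ≫ d = p ≫ (0 : K ⟶ C) := by rw [E.comp_zero h']; simp
  have hcx : c ≫ hp.desc d 0 h0 = d := hp.inl_desc _ _ _
  have hkx : k ≫ hp.desc d 0 h0 = 0 := hp.inr_desc _ _ _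
  generalize hp.desc d 0 h0 = x at hcx hkx
  have : Epi x := by
    have : Epi (c ≫ x) := by rw [hcx]; infer_instance
    exact epi_of_epi c x
  have hkc : E.conflation k x := by
    refine conf_of_coker hk x hkx ?_
    intro T z hz
    obtain ⟨l, hl⟩ := cdesc h' (c ≫ z) (by rw [hp.w_assoc, hz]; simp)
    refine ⟨l, hp.hom_ext ?_ ?_⟩
    · rw [reassoc_of% hcx, hl]
    · rw [reassoc_of% hkx, hz]; simp
  have := cmono hkc
  have pb1 : IsPullback (biprod.fst : N ⊞ K ⟶ N) (biprod.desc c k) d x := by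
    refine ⟨⟨by ext <;> simp [hcx, hkx]⟩, ⟨PullbackCone.IsLimit.mk _
      (fun s => biprod.lift s.fst
        (clift hkc (s.snd - s.fst ≫ c) (by
          rw [Preadditive.sub_comp, Category.assoc, hcx, s.condition, sub_self])).choose) ?_ ?_ ?_⟩⟩
    · intro s; simp
    · intro s
      have := (clift hkc (s.snd - s.fst ≫ c) (by
          rw [Preadditive.sub_comp, Category.assoc, hcx, s.condition, sub_self])).choose_spec
      rw [biprod.lift_desc, this]; simp
    · intro s m h1 h2
      have hs := (clift hkc (s.snd - s.fst ≫ c) (by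
          rw [Preadditive.sub_comp, Category.assoc, hcx, s.condition, sub_self])).choose_spec
      ext
      · simpa using h1
      · rw [biprod.lift_snd, ← cancel_mono k, hs, ← h1, ← h2, biprod.desc_eq]
        simp
  obtain ⟨i1, hi1, _⟩ := conf_pullback h' pb1
  have pb2 : IsPullback (biprod.snd : N ⊞ M ⟶ M) (biprod.map (𝟙 N) p) p biprod.snd := by
    refine ⟨⟨by simp⟩, ⟨PullbackCone.IsLimit.mk _
      (fun s => biprod.lift (s.snd ≫ biprod.fst) s.fst) ?_ ?_ ?_⟩⟩
    · intro s; simp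
    · intro s
      ext
      · simp
      · simpa using s.condition
    · intro s m h1 h2
      ext
      · rw [← h2]; simp
      · simpa using h1
  obtain ⟨i2, hi2, _⟩ := conf_pullback h pb2
  obtain ⟨K0, k0, hk0⟩ := E.deflation_comp hi2 hi1
  have he : biprod.map (𝟙 N) p ≫ biprod.desc c k = biprod.desc c (e ≫ c) := by
    ext
    · simp
    · simp [hp.w]
  rw [he] at hk0
  obtain ⟨K', k', hk', -⟩ := cancel_defl hwic e hk0
  refine ⟨P, k, c, x, conf_of_ker hk' _ ?_ ?_, hkc, hp.w, hcx⟩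
  · rw [Category.assoc, hp.w, reassoc_of% (E.comp_zero h)]; simp
  · intro T z hz
    obtain ⟨s, hs⟩ := clift h' z (by rw [← hcx, reassoc_of% hz]; simp)
    obtain ⟨l, hl⟩ := clift h s (by
      rw [← cancel_mono k, Category.assoc, ← hp.w, reassoc_of% hs, hz]; simp)
    exact ⟨l, by rw [reassoc_of% hl, hs]⟩

lemma section_of_retraction {E : ExactStructure 𝒜} {A B C : 𝒜} {i : A ⟶ B} {d : B ⟶ C}
    (h : E.conflation i d) {r : B ⟶ A} (hr : i ≫ r = 𝟙 A) : ∃ s : C ⟶ B, s ≫ d = 𝟙 C := by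
  have := cepi h
  obtain ⟨s, hs⟩ := cdesc h (𝟙 B - r ≫ i) (by
    rw [Preadditive.comp_sub, reassoc_of% hr]; simp)
  refine ⟨s, ?_⟩
  rw [← cancel_epi d, reassoc_of% hs, Preadditive.sub_comp, Category.assoc, E.comp_zero h]; simp

/-- Lifting along a deflation whose kernel is `Ext¹`-orthogonal. -/
lemma lift_of_ext {E : ExactStructure 𝒜} {A B C Z : 𝒜} {i : A ⟶ B} {d : B ⟶ C}
    (h : E.conflation i d) (hE : Ext1IsZero E Z A) (f : Z ⟶ C) : ∃ g : Z ⟶ B, g ≫ d = f := by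
  obtain ⟨B', f', d', K, k, hp, -⟩ := E.pullback_deflation h f
  obtain ⟨i', hi', -⟩ := conf_pullback h hp
  obtain ⟨r, hr⟩ := hE i' d' hi'
  obtain ⟨s, hs⟩ := section_of_retraction hi' hr
  exact ⟨s ≫ f', by rw [Category.assoc, hp.w, reassoc_of% hs]⟩

lemma conf_id_zero {E : ExactStructure 𝒜} (hwic : IsWIC E) (A : 𝒜) :
    E.conflation (𝟙 A) (0 : A ⟶ (0 : 𝒜)) := by
  obtain ⟨K, k, hk⟩ := hwic (0 : A ⟶ (0 : 𝒜)) 0 (by ext)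
  exact conf_of_ker hk _ (by simp) (fun z _ => ⟨z, by simp⟩)

lemma weq_of_defl {E : ExactStructure 𝒜} {X Y : Set 𝒜}
    (hX : AdditivelyClosed X) (hY : AdditivelyClosed Y) {A B K : 𝒜} {k : K ⟶ A} {f : A ⟶ B}
    (h : E.conflation k f) (hK : K ∈ Y) : WeqO E (X ∩ Y) Y f := by
  refine ⟨0, ⟨hX.1, hY.1⟩, 0, K, k ≫ biprod.inl, ?_, hK⟩
  refine E.conflation_iso (Iso.refl _) ⟨biprod.inl, biprod.fst, by simp, ?_⟩ (Iso.refl _) h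
    (by simp) (by simp)
  ext <;> simp

end ExStr

/-- The "only if" part of the main theorem. -/
theorem stmt_1 (E : ExactStructure 𝒜) (hwic : IsWIC E) (X Y : Set 𝒜)
    (hX : AdditivelyClosed X) (hY : AdditivelyClosed Y)
    (hms : IsModelStructure (CoFibO E X) (FibO (X ∩ Y)) (WeqO E (X ∩ Y) Y)) :
    IsCotorsionPair E X Y ∧ IsCompleteCP E X Y ∧ IsHereditaryCP E X Y ∧
    IsContravariantlyFinite (X ∩ Y) ∧
    (∀ A : 𝒜, Cofibrant (CoFibO E X) A ↔ A ∈ X) ∧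
    (∀ A : 𝒜, Fibrant (FibO (X ∩ Y)) A) ∧
    (∀ A : 𝒜, TrivialObj (WeqO E (X ∩ Y) Y) A ↔ A ∈ Y) := by
  have id0 : ∀ A B : 𝒜, WeqO E (X ∩ Y) Y ((0 : (0 : 𝒜) ⟶ A) ≫ (0 : A ⟶ (0 : 𝒜))) := by
    intro A _
    have := ExStr.weq_of_defl (X := X) hX hY (E.id_deflation (0 : 𝒜)) hY.1
    convert this using 1
    ext
  have toZero : ∀ A : 𝒜, WeqO E (X ∩ Y) Y (0 : A ⟶ (0 : 𝒜)) ↔ A ∈ Y := by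
    intro A
    constructor
    · rintro ⟨W, hW, t, K, k, hk, hK⟩
      obtain ⟨l, hl⟩ := ExStr.clift hk (biprod.inl : A ⟶ A ⊞ W) (by ext)
      exact hY.2.2.2 l (k ≫ biprod.fst) (by rw [reassoc_of% hl]; simp) hK
    · intro hA
      exact ExStr.weq_of_defl hX hY (ExStr.conf_id_zero hwic A) hA
  have triv : ∀ A : 𝒜, TrivialObj (WeqO E (X ∩ Y) Y) A ↔ A ∈ Y := by
    intro A
    rw [← toZero A]
    exact ⟨fun h => hms.weq_cancel_left _ _ h (id0 A A), fun h => hms.weq_cancel_right _ _ h (id0 A A)⟩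
  have fib : ∀ A : 𝒜, Fibrant (FibO (X ∩ Y)) A := by
    intro A W _ g
    exact ⟨0, by ext⟩
  have cofib : ∀ A : 𝒜, Cofibrant (CoFibO E X) A ↔ A ∈ X := by
    intro A
    constructor
    · rintro ⟨Z, d, hd, hZ⟩
      obtain ⟨s, hs⟩ := ExStr.cdesc hd (𝟙 A) (by simp)
      exact hX.2.2.2 d s hs hZ
    · intro hA
      exact ⟨A, 𝟙 A, E.id_deflation A, hA⟩
  -- extending maps into objects of `Y` along cofibrations
  have ext_map : ∀ {A B C B' : 𝒜} (i : A ⟶ B) (d : B ⟶ C) (g : A ⟶ B'), E.conflation i d →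
      C ∈ X → B' ∈ Y → ∃ s : B ⟶ B', i ≫ s = g := by
    intro A B C B' i d g h hC hB'
    obtain ⟨s, hs, -⟩ := hms.lifting_right i (0 : B' ⟶ (0 : 𝒜)) g 0 ⟨C, d, h, hC⟩ (fib B')
      ((toZero B').2 hB') (by simp)
    exact ⟨s, hs⟩
  have orth : ∀ A ∈ X, ∀ B ∈ Y, Ext1IsZero E A B := by
    intro A hA B hB M i d h
    exact ext_map i d (𝟙 B) h hA hB
  have tfib : ∀ {A B : 𝒜} (f : A ⟶ B), FibO (X ∩ Y) f → WeqO E (X ∩ Y) Y f →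
      ∃ (K : 𝒜) (k : K ⟶ A), E.conflation k f ∧ K ∈ Y := by
    rintro A B f hf ⟨W, hW, t, K, k, hk, hK⟩
    obtain ⟨s, rfl⟩ := hf W hW t
    obtain ⟨K', k', hk', a, b, hab⟩ := ExStr.cancel_defl hwic s hk
    exact ⟨K', k', hk', hY.2.2.2 a b hab hK⟩
  have compl : IsCompleteCP E X Y := by
    intro A
    constructor
    · obtain ⟨Z, j, q, -, hj, hq, hq'⟩ := hms.fact_right (0 : (0 : 𝒜) ⟶ A)
      obtain ⟨K, k, hk, hK⟩ := tfib q hq hq'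
      refine ⟨K, Z, k, q, hk, (cofib Z).1 ?_, hK⟩
      have : j = 0 := by ext
      rwa [this] at hj
    · obtain ⟨Z, j, q, -, ⟨C, d, hd, hC⟩, hq, hq'⟩ := hms.fact_right (0 : A ⟶ (0 : 𝒜))
      refine ⟨Z, C, j, d, hd, hC, (toZero Z).1 ?_⟩
      have : q = 0 := by ext
      rwa [this] at hq'
  have cotL : ∀ A : 𝒜, (∀ B ∈ Y, Ext1IsZero E A B) → A ∈ X := by
    intro A h
    obtain ⟨Y₀, X₀, i, d, hid, hX₀, hY₀⟩ := (compl A).1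
    obtain ⟨r, hr⟩ := h Y₀ hY₀ i d hid
    obtain ⟨s, hs⟩ := ExStr.section_of_retraction hid hr
    exact hX.2.2.2 s d hs hX₀
  have cotR : ∀ B : 𝒜, (∀ A ∈ X, Ext1IsZero E A B) → B ∈ Y := by
    intro B h
    obtain ⟨Y₁, X₁, i, d, hid, hX₁, hY₁⟩ := (compl B).2
    obtain ⟨r, hr⟩ := h X₁ hX₁ i d hid
    exact hY.2.2.2 i r hr hY₁
  have herY : ∀ {K A B : 𝒜} (i : K ⟶ A) (d : A ⟶ B), E.conflation i d → K ∈ Y → A ∈ Y →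
      B ∈ Y := by
    intro K A B i d h hK hA
    have h1 := hms.weq_comp _ _ ((triv A).2 hA) (ExStr.weq_of_defl (X := X) hX hY h hK)
    rw [zero_comp] at h1
    exact (triv B).1 h1
  have herX : ∀ {K A B : 𝒜} (i : K ⟶ A) (d : A ⟶ B), E.conflation i d → A ∈ X → B ∈ X →
      K ∈ X := by
    intro K A B i d h hA hB
    obtain ⟨L, M, y, p, hyp, hM, hL⟩ := (compl K).1
    obtain ⟨N, C, e, d', hed, hC, hN⟩ := (compl M).2
    obtain ⟨P, k, c, x, hyc, hkx, hw, hcx⟩ := ExStr.push_defl hwic hyp hed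
    have hP : P ∈ Y := herY _ _ hyc hL hN
    obtain ⟨k', hk'⟩ := ext_map i d k h hB hP
    obtain ⟨g, hg⟩ := ExStr.lift_of_ext hyc (orth A hA L hL) k'
    obtain ⟨s, hs⟩ := ExStr.clift hed (i ≫ g) (by
      rw [← hcx, Category.assoc, reassoc_of% hg, reassoc_of% hk', E.comp_zero hkx])
    have := ExStr.cmono hkx
    refine hX.2.2.2 s p ?_ hM
    rw [← cancel_mono k, Category.assoc, ← hw, reassoc_of% hs, hg, hk', Category.id_comp]
  refine ⟨⟨fun A => ⟨orth A, cotL A⟩, fun B => ⟨fun hB A hA => orth A hA B hB, cotR B⟩⟩, compl,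
    ⟨herX, herY⟩, ?_, cofib, fib, triv⟩
  intro B
  obtain ⟨Z, i, p, -, hi, hi', hp⟩ := hms.fact_left (0 : (0 : 𝒜) ⟶ B)
  have h0 : i = 0 := by ext
  rw [h0] at hi hi'
  exact ⟨Z, p, ⟨(cofib Z).1 hi, (triv Z).1 hi'⟩, hp⟩
end

section
/- Let 𝒜 be a weakly idempotent complete exact category, (𝒳,𝒴) a complete cotorsion pair in 𝒜, and ω = 𝒳∩𝒴. If (CoFib_ω, Fib_ω, Weq_ω) is a closed model structure on 𝒜, then the cotorsion pair (𝒳,𝒴) is hereditary. -/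
open CategoryTheory Limits ZeroObject

universe v u

variable {𝒜 : Type u} [Category.{v} 𝒜] [Preadditive 𝒜] [HasZeroObject 𝒜]
  [HasBinaryBiproducts 𝒜]

namespace S3

variable {E : ExactStructure 𝒜}

lemma lift_ker {A B C T : 𝒜} {i : A ⟶ B} {d : B ⟶ C} (h : E.conflation i d)
    (t : T ⟶ B) (ht : t ≫ d = 0) : ∃ s : T ⟶ A, s ≫ i = t := by
  obtain ⟨l⟩ := E.isKernel h
  obtain ⟨s, hs⟩ := KernelFork.IsLimit.lift' l t ht
  exact ⟨s, hs⟩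

lemma desc_coker {A B C T : 𝒜} {i : A ⟶ B} {d : B ⟶ C} (h : E.conflation i d)
    (t : B ⟶ T) (ht : i ≫ t = 0) : ∃ s : C ⟶ T, d ≫ s = t := by
  obtain ⟨l⟩ := E.isCokernel h
  obtain ⟨s, hs⟩ := CokernelCofork.IsColimit.desc' l t ht
  exact ⟨s, hs⟩

lemma mono_infl {A B C : 𝒜} {i : A ⟶ B} {d : B ⟶ C} (h : E.conflation i d) : Mono i := by
  obtain ⟨l⟩ := E.isKernel h
  exact ⟨fun a b hab => Fork.IsLimit.hom_ext l hab⟩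

lemma epi_defl {A B C : 𝒜} {i : A ⟶ B} {d : B ⟶ C} (h : E.conflation i d) : Epi d := by
  obtain ⟨l⟩ := E.isCokernel h
  exact ⟨fun a b hab => Cofork.IsColimit.hom_ext l hab⟩

lemma po {A B Z A' P : 𝒜} {i : A ⟶ B} {d : B ⟶ Z} {f : A ⟶ A'} {f' : B ⟶ P} {i' : A' ⟶ P}
    (h : E.conflation i d) (hp : IsPushout i f f' i') :
    ∃ d' : P ⟶ Z, f' ≫ d' = d ∧ E.conflation i' d' := by
  obtain ⟨P₂, f₂, i₂, Q, q, hp₂, hc⟩ := E.pushout_inflation h f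
  have hz : i ≫ d = f ≫ (0 : A' ⟶ Z) := by rw [E.comp_zero h, comp_zero]
  let d' : P ⟶ Z := hp.desc d 0 hz
  have h1 : f' ≫ d' = d := hp.inl_desc _ _ _
  have h2 : i' ≫ d' = 0 := hp.inr_desc _ _ _
  refine ⟨d', h1, ?_⟩
  let e : P₂ ≅ P := hp₂.isoIsPushout _ _ hp
  have e1 : f₂ ≫ e.hom = f' := hp₂.inl_isoIsPushout_hom _ _ hp
  have e2 : i₂ ≫ e.hom = i' := hp₂.inr_isoIsPushout_hom _ _ hp
  have := epi_defl h
  have := epi_defl hc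
  obtain ⟨u, hu⟩ := desc_coker hc (e.hom ≫ d') (by rw [← Category.assoc, e2, h2])
  obtain ⟨w, hw⟩ := desc_coker h (f₂ ≫ q) (by
    rw [← Category.assoc, hp₂.w, Category.assoc, E.comp_zero hc, comp_zero])
  have huw : u ≫ w = 𝟙 Q := by
    rw [← cancel_epi q]
    apply hp₂.hom_ext
    · simp only [Category.comp_id]
      rw [← hw, ← Category.assoc q, hu, ← Category.assoc, ← Category.assoc, e1, h1]
    · simp only [Category.comp_id]
      rw [← Category.assoc q, hu, ← Category.assoc, ← Category.assoc, e2, h2, zero_comp,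
        E.comp_zero hc]
  have hwu : w ≫ u = 𝟙 Z := by
    rw [← cancel_epi d, ← Category.assoc, hw, Category.assoc, hu, ← Category.assoc, e1, h1,
      Category.comp_id]
  exact E.conflation_iso (Iso.refl _) e ⟨u, w, huw, hwu⟩ hc (by simp [e2]) hu

lemma pb {A B Z Z' P : 𝒜} {i : A ⟶ B} {d : B ⟶ Z} {f : Z' ⟶ Z} {f' : P ⟶ B} {d' : P ⟶ Z'}
    (h : E.conflation i d) (hp : IsPullback f' d' d f) :
    ∃ i' : A ⟶ P, i' ≫ f' = i ∧ E.conflation i' d' := by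
  obtain ⟨P₂, f₂, d₂, Q, q, hp₂, hc⟩ := E.pullback_deflation h f
  have hz : i ≫ d = (0 : A ⟶ Z') ≫ f := by rw [E.comp_zero h, zero_comp]
  let i' : A ⟶ P := hp.lift i 0 hz
  have h1 : i' ≫ f' = i := hp.lift_fst _ _ _
  have h2 : i' ≫ d' = 0 := hp.lift_snd _ _ _
  refine ⟨i', h1, ?_⟩
  let e : P₂ ≅ P := hp₂.isoIsPullback _ _ hp
  have e1 : e.hom ≫ f' = f₂ := hp₂.isoIsPullback_hom_fst _ _ hp
  have e2 : e.hom ≫ d' = d₂ := hp₂.isoIsPullback_hom_snd _ _ hp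
  have := mono_infl h
  have := mono_infl hc
  obtain ⟨u, hu⟩ := lift_ker hc (i' ≫ e.inv) (by rw [← e2]; simp [h2])
  obtain ⟨w, hw⟩ := lift_ker h (q ≫ f₂) (by
    rw [Category.assoc, hp₂.w, ← Category.assoc, E.comp_zero hc, zero_comp])
  have hu' : u ≫ q ≫ e.hom = i' := by rw [← Category.assoc, hu]; simp
  have hwi : w ≫ i' = q ≫ e.hom := by
    apply hp.hom_ext
    · rw [Category.assoc, h1, hw, Category.assoc, e1]
    · rw [Category.assoc, h2, comp_zero, Category.assoc, e2, E.comp_zero hc]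
  have hwu : w ≫ u = 𝟙 Q := by
    rw [← cancel_mono q, Category.assoc, hu, ← Category.assoc, hwi]; simp
  have huw : u ≫ w = 𝟙 A := by
    rw [← cancel_mono i, Category.assoc, hw, ← e1, Category.id_comp, ← h1, ← hu']; simp
  exact E.conflation_iso ⟨w, u, hwu, huw⟩ e (Iso.refl _) hc hwi.symm (by simp [e2])

lemma po_exists {A B Z A' : 𝒜} {i : A ⟶ B} {d : B ⟶ Z} (h : E.conflation i d) (f : A ⟶ A') :
    ∃ (P : 𝒜) (f' : B ⟶ P) (i' : A' ⟶ P) (d' : P ⟶ Z),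
      IsPushout i f f' i' ∧ f' ≫ d' = d ∧ E.conflation i' d' := by
  obtain ⟨P, f', i', _, _, hp, _⟩ := E.pushout_inflation h f
  obtain ⟨d', h1, h2⟩ := po h hp
  exact ⟨P, f', i', d', hp, h1, h2⟩

lemma pb_exists {A B Z Z' : 𝒜} {i : A ⟶ B} {d : B ⟶ Z} (h : E.conflation i d) (f : Z' ⟶ Z) :
    ∃ (P : 𝒜) (f' : P ⟶ B) (d' : P ⟶ Z') (i' : A ⟶ P),
      IsPullback f' d' d f ∧ i' ≫ f' = i ∧ E.conflation i' d' := by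
  obtain ⟨P, f', d', _, _, hp, _⟩ := E.pullback_deflation h f
  obtain ⟨i', h1, h2⟩ := pb h hp
  exact ⟨P, f', d', i', hp, h1, h2⟩

lemma section_of_retr {A B C : 𝒜} {i : A ⟶ B} {d : B ⟶ C} (h : E.conflation i d)
    (r : B ⟶ A) (hr : i ≫ r = 𝟙 A) : ∃ s : C ⟶ B, s ≫ d = 𝟙 C := by
  have := epi_defl h
  obtain ⟨s, hs⟩ := desc_coker h (𝟙 B - r ≫ i) (by
    rw [Preadditive.comp_sub, ← Category.assoc, hr]; simp)
  refine ⟨s, ?_⟩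
  rw [← cancel_epi d, ← Category.assoc, hs, Preadditive.sub_comp, Category.assoc, E.comp_zero h]
  simp

lemma retr_of_section {A B C : 𝒜} {i : A ⟶ B} {d : B ⟶ C} (h : E.conflation i d)
    (s : C ⟶ B) (hs : s ≫ d = 𝟙 C) : ∃ r : B ⟶ A, i ≫ r = 𝟙 A := by
  have := mono_infl h
  obtain ⟨r, hr⟩ := lift_ker h (𝟙 B - d ≫ s) (by
    rw [Preadditive.sub_comp, Category.assoc, hs]; simp)
  refine ⟨r, ?_⟩
  rw [← cancel_mono i, Category.assoc, hr, Preadditive.comp_sub, ← Category.assoc, E.comp_zero h]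
  simp

lemma lift_ext {A B C T : 𝒜} {i : A ⟶ B} {d : B ⟶ C} (h : E.conflation i d)
    (hT : Ext1IsZero E T A) (g : T ⟶ C) : ∃ s : T ⟶ B, s ≫ d = g := by
  obtain ⟨P, f', d', i', hp, -, hc⟩ := pb_exists h g
  obtain ⟨r, hr⟩ := hT i' d' hc
  obtain ⟨s, hs⟩ := section_of_retr hc r hr
  exact ⟨s ≫ f', by rw [Category.assoc, hp.w, ← Category.assoc, hs, Category.id_comp]⟩

lemma ext_fst_retract {A Z B : 𝒜} (i : A ⟶ Z) (r : Z ⟶ A) (hir : i ≫ r = 𝟙 A)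
    (h : Ext1IsZero E Z B) : Ext1IsZero E A B := by
  intro M j d hc
  obtain ⟨s, hs⟩ := lift_ext hc h r
  exact retr_of_section hc (i ≫ s) (by rw [Category.assoc, hs, hir])

lemma ext_snd_retract {A Z B : 𝒜} (i : B ⟶ Z) (r : Z ⟶ B) (hir : i ≫ r = 𝟙 B)
    (h : Ext1IsZero E A Z) : Ext1IsZero E A B := by
  intro M j d hc
  obtain ⟨P, f', i', d', hp, -, hc'⟩ := po_exists hc i
  obtain ⟨ρ, hρ⟩ := h i' d' hc'
  exact ⟨f' ≫ ρ ≫ r, by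
    rw [← Category.assoc, hp.w, Category.assoc, ← Category.assoc i', hρ, Category.id_comp, hir]⟩

lemma to_zero (A : 𝒜) : E.conflation (𝟙 A) (0 : A ⟶ (0 : 𝒜)) := by
  have h := E.id_deflation (0 : 𝒜)
  have hp : IsPushout (0 : (0 : 𝒜) ⟶ 0) (0 : (0 : 𝒜) ⟶ A) (0 : (0 : 𝒜) ⟶ A) (𝟙 A) := by
    have : (0 : (0 : 𝒜) ⟶ 0) = 𝟙 _ := (isZero_zero 𝒜).eq_of_src _ _
    rw [this]
    exact IsPushout.of_horiz_isIso ⟨by simp⟩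
  obtain ⟨d', -, hc⟩ := po h hp
  rwa [(isZero_zero 𝒜).eq_of_tgt d' 0] at hc

/-- composite of two inflations, through a pushout -/
lemma comp_infl {Y' X' K Y2 X2 C : 𝒜} {a : Y' ⟶ X'} {f : X' ⟶ K} {i : X' ⟶ Y2} {e : Y2 ⟶ X2}
    {f' : Y2 ⟶ C} {j : K ⟶ C} (haf : E.conflation a f) (hie : E.conflation i e)
    (hp : IsPushout i f f' j) : E.conflation (a ≫ i) f' := by
  obtain ⟨e', he, hj⟩ := po hie hp
  have := mono_infl hj
  have := mono_infl haf
  have := mono_infl hie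
  have hq : ∀ s : PullbackCone e' e, (s.fst - s.snd ≫ f') ≫ e' = 0 := fun s => by
    rw [Preadditive.sub_comp, Category.assoc, he, s.condition, sub_self]
  have hB : IsPullback (biprod.desc f' j) biprod.fst e' e := by
    refine ⟨⟨?_⟩, ⟨PullbackCone.IsLimit.mk _ (fun s => biprod.lift s.snd
      (lift_ker hj _ (hq s)).choose) ?_ ?_ ?_⟩⟩
    · ext
      · simp [he]
      · simp [E.comp_zero hj]
    · intro s
      rw [biprod.lift_desc, (lift_ker hj _ (hq s)).choose_spec]
      abel
    · intro s; simp
    · intro s m h1 h2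
      apply biprod.hom_ext
      · simpa using h2
      · rw [biprod.lift_snd, ← cancel_mono j,
          (lift_ker hj _ (hq s)).choose_spec, ← h1, ← h2, biprod.desc_eq]
        simp
  obtain ⟨l₁, -, hd₁⟩ := pb hie hB.flip
  have hM : IsPullback biprod.snd (biprod.map (𝟙 Y2) f) f biprod.snd := by
    refine ⟨⟨by simp⟩, ⟨PullbackCone.IsLimit.mk _ (fun s => biprod.lift (s.snd ≫ biprod.fst) s.fst)
      ?_ ?_ ?_⟩⟩
    · intro s; simp
    · intro s
      ext
      · simp
      · simpa using s.condition
    · intro s m h1 h2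
      ext
      · simp [← h2]
      · simpa using h1
  obtain ⟨l₂, -, hd₂⟩ := pb haf hM
  obtain ⟨L, k, hk⟩ := E.deflation_comp hd₂ hd₁
  let s : Y2 ⊞ X' ⟶ Y2 := biprod.desc (𝟙 _) i
  have hs : biprod.inl ≫ s = 𝟙 _ := by simp [s]
  have : Epi s := (SplitEpi.mk _ hs).epi
  have hcomp : biprod.map (𝟙 Y2) f ≫ biprod.desc f' j = s ≫ f' := by
    ext
    · simp [s]
    · simp [s, hp.w]
  rw [hcomp] at hk
  have hai : (a ≫ i) ≫ f' = 0 := by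
    rw [Category.assoc, hp.w, ← Category.assoc, E.comp_zero haf, zero_comp]
  have kerf : ∀ {T : 𝒜} (t : T ⟶ Y2), t ≫ f' = 0 → ∃ w : T ⟶ Y', w ≫ a ≫ i = t := by
    intro T t ht
    obtain ⟨z, hz⟩ := lift_ker hie t (by rw [← he, ← Category.assoc, ht, zero_comp])
    obtain ⟨w, hw⟩ := lift_ker haf z (by
      rw [← cancel_mono j, Category.assoc, ← hp.w, ← Category.assoc, hz, ht, zero_comp])
    exact ⟨w, by rw [← Category.assoc, hw, hz]⟩
  obtain ⟨w, hw⟩ := kerf (k ≫ s) (by rw [Category.assoc]; exact E.comp_zero hk)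
  obtain ⟨m, hm⟩ := lift_ker hk (biprod.lift (-i) (𝟙 X')) (by simp [s])
  obtain ⟨n, hn⟩ := lift_ker hk ((a ≫ i) ≫ biprod.inl) (by
    rw [Category.assoc, ← Category.assoc biprod.inl, hs, Category.id_comp, hai])
  have : Mono (a ≫ i) := mono_comp _ _
  have hmw : m ≫ w = 0 := by
    rw [← cancel_mono (a ≫ i), Category.assoc, hw, ← Category.assoc, hm]
    simp [s]
  have hnw : n ≫ w = 𝟙 _ := by
    rw [← cancel_mono (a ≫ i), Category.assoc, hw, ← Category.assoc, hn, Category.assoc, hs]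
    simp
  have hpo : IsPushout k w s (a ≫ i) := by
    refine ⟨⟨hw.symm⟩, ⟨PushoutCocone.IsColimit.mk _ (fun c => biprod.inl ≫ c.inl) ?_ ?_ ?_⟩⟩
    · intro c
      have h1 : biprod.lift (-i) (𝟙 X') ≫ c.inl = 0 := by
        rw [← hm, Category.assoc, c.condition, ← Category.assoc, hmw, zero_comp]
      ext
      · simp [s]
      · rw [biprod.lift_eq] at h1
        simp only [Preadditive.neg_comp, Preadditive.add_comp, Category.id_comp,
          Category.assoc, neg_add_eq_zero] at h1
        simp [s, h1]
    · intro c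
      rw [← Category.assoc, ← hn, Category.assoc, c.condition, ← Category.assoc, hnw,
        Category.id_comp]
    · intro c m' h1 h2
      rw [← h1, ← Category.assoc, hs, Category.id_comp]
  obtain ⟨d', hd', hc⟩ := po hk hpo
  rwa [(cancel_epi s).1 hd'] at hc

end S3

/-- If the `ω`-construction yields a model structure, the complete cotorsion pair
is hereditary. -/
theorem stmt_3 (E : ExactStructure 𝒜) (hwic : IsWIC E) (X Y : Set 𝒜)
    (hcp : IsCotorsionPair E X Y) (hcomp : IsCompleteCP E X Y)
    (hms : IsModelStructure (CoFibO E X) (FibO (X ∩ Y)) (WeqO E (X ∩ Y) Y)) :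
    IsHereditaryCP E X Y := by
  have hX := hcp.1
  have hY := hcp.2
  have ext0 : ∀ {A B : 𝒜}, A ∈ X → B ∈ Y → Ext1IsZero E A B := fun hA hB => (hX _).1 hA _ hB
  have Xretr : ∀ {A B : 𝒜} (i : A ⟶ B) (r : B ⟶ A), i ≫ r = 𝟙 A → B ∈ X → A ∈ X :=
    fun i r h hB => (hX _).2 fun C hC => S3.ext_fst_retract i r h (ext0 hB hC)
  have Yretr : ∀ {A B : 𝒜} (i : A ⟶ B) (r : B ⟶ A), i ≫ r = 𝟙 A → B ∈ Y → A ∈ Y :=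
    fun i r h hB => (hY _).2 fun C hC => S3.ext_snd_retract i r h (ext0 hC hB)
  have zX : (0 : 𝒜) ∈ X := (hX _).2 fun B hB M j d hc =>
    S3.retr_of_section hc 0 ((isZero_zero 𝒜).eq_of_src _ _)
  have zY : (0 : 𝒜) ∈ Y := (hY _).2 fun B hB M j d hc =>
    ⟨0, (isZero_zero 𝒜).eq_of_src _ _⟩
  have weq : ∀ {K A B : 𝒜} (k : K ⟶ A) (d : A ⟶ B), E.conflation k d → K ∈ Y →
      WeqO E (X ∩ Y) Y d := by
    intro K A B k d hc hK
    refine ⟨0, ⟨zX, zY⟩, 0, K, k ≫ biprod.inl, ?_, hK⟩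
    refine E.conflation_iso (Iso.refl _) ⟨biprod.inl, biprod.fst, by simp, ?_⟩ (Iso.refl _)
      hc (by simp) (by simp)
    ext
    · simp
  have fib : ∀ {K A B : 𝒜} (k : K ⟶ A) (d : A ⟶ B), E.conflation k d → K ∈ Y →
      FibO (X ∩ Y) d := fun k d hc hK W hW g => S3.lift_ext hc (ext0 hW.1 hK) g
  have Ycok : ∀ {K A B : 𝒜} (i : K ⟶ A) (d : A ⟶ B), E.conflation i d →
      K ∈ Y → A ∈ Y → B ∈ Y := by
    intro K A B i d hc hK hA
    have h1 := weq i d hc hK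
    have h2 := weq _ _ (S3.to_zero (E := E) A) hA
    have h3 : WeqO E (X ∩ Y) Y (0 : B ⟶ (0 : 𝒜)) :=
      hms.weq_cancel_left d 0 h1 (by rwa [comp_zero])
    obtain ⟨W, hW, t, L, k, hk, hL⟩ := h3
    obtain ⟨s, hs⟩ := S3.lift_ker hk (biprod.inl : B ⟶ B ⊞ W) ((isZero_zero 𝒜).eq_of_tgt _ _)
    exact Yretr s (k ≫ biprod.fst) (by rw [← Category.assoc, hs]; simp) hL
  refine ⟨?_, Ycok⟩
  intro K A B i d hc hA hB
  obtain ⟨-, Y1, X1, f, e, hfe, hX1, hY1⟩ := hcomp K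
  -- `Y1` is in `X`
  have hY1X : Y1 ∈ X := by
    obtain ⟨P, f', i', d', hp, -, hi'⟩ := S3.po_exists hc f
    obtain ⟨e', -, he'⟩ := S3.po hfe hp.flip
    obtain ⟨r, hr⟩ := ext0 hB hY1 i' d' hi'
    obtain ⟨⟨Y3, X3, k, q, hkq, hX3, hY3⟩, -⟩ := hcomp Y1
    obtain ⟨g, hg⟩ := S3.lift_ext hkq (ext0 hA hY3) (f' ≫ r)
    obtain ⟨s, -, hs⟩ := hms.lifting_right f' q g r ⟨X1, e', he', hX1⟩ (fib k q hkq hY3)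
      (weq k q hkq hY3) hg
    exact Xretr (i' ≫ s) q (by rw [Category.assoc, hs, hr]) hX3
  obtain ⟨⟨Y', X', a, p, hap, hX', hY'⟩, -⟩ := hcomp K
  obtain ⟨-, Y2, X2, i2, e2, hie, hX2, hY2⟩ := hcomp X'
  obtain ⟨C, p', j, e', hpo, he', hj⟩ := S3.po_exists hie p
  have hC' := S3.comp_infl hap hie hpo
  have hC : C ∈ Y := Ycok _ _ hC' hY' hY2
  have hC0 := S3.to_zero (E := E) C
  obtain ⟨g, hg, -⟩ := hms.lifting_right f (0 : C ⟶ (0 : 𝒜)) j 0 ⟨X1, e, hfe, hX1⟩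
    (fib _ _ hC0 hC) (weq _ _ hC0 hC) (by simp)
  obtain ⟨t, ht⟩ := S3.lift_ext hC' (ext0 hY1X hY') g
  have hu : (f ≫ t) ≫ p' = j := by rw [Category.assoc, ht, hg]
  obtain ⟨s, hs⟩ := S3.lift_ker hie (f ≫ t) (by
    rw [← he', ← Category.assoc, hu, E.comp_zero hj])
  have := S3.mono_infl hj
  refine Xretr s p ?_ hX'
  rw [← cancel_mono j, Category.assoc, ← hpo.w, ← Category.assoc, hs, hu, Category.id_comp]
end
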